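/- With X_n = ⊕_{r+s=n} X_{rs} and d_n = Σ_{r+s=n} Σ_{l=0, r+l>0}^{s} d^l_{rs}, the augmented sequence E ←(−μ)− X_0 ←(d_1)− X_1 ←(d_2)− X_2 ← ⋯, where μ : X_0 = E⊗E → E is the multiplication map, is a relative projective resolution of E as an E-bimodule: it is a complex of E-bimodules (d_n ∘ d_{n+1} = 0 and μ ∘ d_1 = 0), each X_n is a relatively projective E-bimodule (a direct summand of a module of the form E⊗V⊗E), and the augmented complex is contractible as a complex of left E-modules. -/

import Mathlib

open TensorProduct DirectSum

set_option maxHeartbeats 1000000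
set_option maxSynthPendingDepth 3
set_option synthInstance.maxHeartbeats 400000

noncomputable section

namespace HopfCrossed

variable (k : Type) [CommRing k]

def TpowCat (V : ModuleCat k) : ℕ → ModuleCat k
  | 0 => ModuleCat.of k k
  | n + 1 => ModuleCat.of k (V ⊗[k] (TpowCat V n))

abbrev Tpow (V : Type) [AddCommGroup V] [Module k V] (n : ℕ) : Type :=
  TpowCat k (ModuleCat.of k V) n

def tp {V : Type} [AddCommGroup V] [Module k V] : ∀ {n : ℕ}, (Fin n → V) → Tpow k V n
  | 0, _ => (1 : k)
  | _ + 1, v => (v 0) ⊗ₜ[k] (tp fun i => v i.succ)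

section Coalg
variable {H : Type} [AddCommGroup H] [Module k H]

def itComul [Coalgebra k H] : ∀ n : ℕ, H →ₗ[k] Tpow k H (n + 1)
  | 0 => (TensorProduct.rid k H).symm.toLinearMap
  | n + 1 =>
      (TensorProduct.map LinearMap.id (itComul n)) ∘ₗ (Coalgebra.comul (R := k))

def SRep [Coalgebra k H] (n : ℕ) (h : H) (N : ℕ) (u : Fin N → Fin (n + 1) → H) : Prop :=
  itComul k n h = ∑ i, tp k (u i)

def iterAct {A : Type} [AddCommGroup A] [Module k A]
    (act : H →ₗ[k] A →ₗ[k] A) : ∀ {s : ℕ}, (Fin s → H) → A → A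
  | 0, _, a => a
  | _ + 1, h, a => act (h 0) (iterAct act (fun i => h i.succ) a)

end Coalg

/-- A weak action of a Hopf algebra `H` on a `k`-algebra `A` (Blattner–Cohen–Montgomery,
Doi–Takeuchi), written `act h a = a^h`. -/
structure WeakAction (k A H : Type) [CommRing k] [Ring A] [Algebra k A] [Ring H] [HopfAlgebra k H] : Type where
  act : H →ₗ[k] A →ₗ[k] A
  act_mul : ∀ (h : H) (a b : A) (N : ℕ) (u : Fin N → Fin 2 → H), SRep k 1 h N u →
    act h (a * b) = ∑ i, act (u i 0) a * act (u i 1) b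
  act_one : ∀ h : H, act h 1 = Coalgebra.counit (R := k) h • (1 : A)
  one_act : ∀ a : A, act 1 a = a

variable {A H : Type} [Ring A] [Algebra k A] [Ring H] [HopfAlgebra k H]
variable {k}

/-- Normality of the cocycle `f`. -/
def IsNormal (f : H →ₗ[k] H →ₗ[k] A) : Prop :=
  ∀ h : H, f h 1 = Coalgebra.counit (R := k) h • (1 : A) ∧
    f 1 h = Coalgebra.counit (R := k) h • (1 : A)

/-- The cocycle condition
`f(l⁽¹⁾,m⁽¹⁾)^{h⁽¹⁾} f(h⁽²⁾, l⁽²⁾m⁽²⁾) = f(h⁽¹⁾,l⁽¹⁾) f(h⁽²⁾l⁽²⁾, m)`. -/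
def IsCocycle (W : WeakAction k A H) (f : H →ₗ[k] H →ₗ[k] A) : Prop :=
  ∀ (h l m : H) (N₁ N₂ N₃ : ℕ) (u : Fin N₁ → Fin 2 → H) (v : Fin N₂ → Fin 2 → H)
    (w : Fin N₃ → Fin 2 → H),
    SRep k 1 h N₁ u → SRep k 1 l N₂ v → SRep k 1 m N₃ w →
    (∑ i, ∑ j, ∑ p, W.act (u i 0) (f (v j 0) (w p 0)) * f (u i 1) (v j 1 * w p 1)) =
      ∑ i, ∑ j, f (u i 0) (v j 0) * f (u i 1 * v j 1) m

/-- The twisted module condition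
`(a^{l⁽¹⁾})^{h⁽¹⁾} f(h⁽²⁾,l⁽²⁾) = f(h⁽¹⁾,l⁽¹⁾) a^{h⁽²⁾l⁽²⁾}`. -/
def IsTwistedModule (W : WeakAction k A H) (f : H →ₗ[k] H →ₗ[k] A) : Prop :=
  ∀ (h l : H) (a : A) (N₁ N₂ : ℕ) (u : Fin N₁ → Fin 2 → H) (v : Fin N₂ → Fin 2 → H),
    SRep k 1 h N₁ u → SRep k 1 l N₂ v →
    (∑ i, ∑ j, W.act (u i 0) (W.act (v j 0) a) * f (u i 1) (v j 1)) =
      ∑ i, ∑ j, f (u i 0) (v j 0) * W.act (u i 1 * v j 1) a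

variable (k A H) in
/-- A crossed product `E = A #_f H` of `A` by `H`:  a ring `E` identified with `A ⊗ H`
as a `k`-module, whose multiplication is given by the crossed product formula
`(a # h)(b # l) = a b^{h⁽¹⁾} f(h⁽²⁾,l⁽¹⁾) # h⁽³⁾ l⁽²⁾`. -/
structure CrossedProduct (E : Type) [Ring E] [Algebra k E] extends WeakAction k A H where
  f : H →ₗ[k] H →ₗ[k] A
  ι : (A ⊗[k] H) ≃ₗ[k] E
  ι_one : ι (1 ⊗ₜ[k] 1) = 1
  ι_mul : ∀ (a b : A) (h l : H) (N M : ℕ) (u : Fin N → Fin 3 → H) (v : Fin M → Fin 2 → H),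
    SRep k 2 h N u → SRep k 1 l M v →
    ι (a ⊗ₜ[k] h) * ι (b ⊗ₜ[k] l) =
      ∑ i, ∑ j, ι ((a * act (u i 0) b * f (u i 1) (v j 0)) ⊗ₜ[k] (u i 2 * v j 1))
  f_normal : IsNormal f
  f_cocycle : IsCocycle toWeakAction f
  f_twisted : IsTwistedModule toWeakAction f

namespace CrossedProduct

variable {E : Type} [Ring E] [Algebra k E] (S : CrossedProduct k A H E)

/-- The canonical map `A → E`, `a ↦ a # 1`. -/
def aE : A →ₗ[k] E := S.ι.toLinearMap ∘ₗ (TensorProduct.mk k A H).flip 1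

/-- The canonical map `H → E`, `h ↦ 1 # h`. -/
def hE : H →ₗ[k] E := S.ι.toLinearMap ∘ₗ (TensorProduct.mk k A H) 1

end CrossedProduct


section Hochschild

variable (k) in
/-- For a `k`-algebra `B`, the submodule `k·1 ⊆ B`. -/
abbrev unitSub (B : Type) [Ring B] [Algebra k B] : Submodule k B :=
  LinearMap.range (Algebra.linearMap k B)

variable (k) in
/-- `B̄ = B/k`. -/
abbrev Qbar (B : Type) [Ring B] [Algebra k B] : Type := B ⧸ unitSub k B

variable (k) in
/-- The canonical projection `B → B̄`. -/
abbrev qbar (B : Type) [Ring B] [Algebra k B] : B →ₗ[k] Qbar k B :=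
  (unitSub k B).mkQ

/-- A `B`-bimodule structure (with commuting `k`-linear left and right actions)
on a `k`-module `M`. -/
structure Bimod (k B M : Type) [CommRing k] [Ring B] [Algebra k B]
    [AddCommGroup M] [Module k M] : Type where
  l : B →ₗ[k] M →ₗ[k] M
  r : B →ₗ[k] M →ₗ[k] M
  l_one : l 1 = LinearMap.id
  r_one : r 1 = LinearMap.id
  l_mul : ∀ x y : B, l (x * y) = l x ∘ₗ l y
  r_mul : ∀ x y : B, r (x * y) = r y ∘ₗ r x
  lr_comm : ∀ x y : B, l x ∘ₗ r y = r y ∘ₗ l x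

/-- Replace the `r`-tuple `a` by the `(r-1)`-tuple obtained by multiplying the
`i`-th and `(i+1)`-st entries. -/
def mulAt {A : Type} [Mul A] {r : ℕ} (a : Fin (r + 1) → A) (i : Fin r) (j : Fin r) : A :=
  if (j : ℕ) < (i : ℕ) then a j.castSucc
  else if (j : ℕ) = (i : ℕ) then a j.castSucc * a j.succ else a j.succ

variable (k) in
/-- The degree-`n` part `M ⊗ B̄^{⊗n}` of the normalized Hochschild chain complex. -/
abbrev HCh (B M : Type) [Ring B] [Algebra k B] [AddCommGroup M] [Module k M]
    (n : ℕ) : Type :=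
  M ⊗[k] Tpow k (Qbar k B) n

variable (k) in
/-- `IsHochschildD l r bd` says that `bd` is the differential of the normalized
Hochschild chain complex of `B` with coefficients in the bimodule `M` (with left
action `l` and right action `r`):
`b(m ⊗ x₁ ⊗ ⋯ ⊗ xₙ) = m x₁ ⊗ x₂ ⊗ ⋯ + ∑ (-1)^i m ⊗ ⋯ ⊗ xᵢxᵢ₊₁ ⊗ ⋯ + (-1)^n xₙ m ⊗ x₁ ⊗ ⋯ ⊗ xₙ₋₁`. -/
def IsHochschildD {B M : Type} [Ring B] [Algebra k B] [AddCommGroup M] [Module k M]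
    (l r : B →ₗ[k] M →ₗ[k] M)
    (bd : ∀ n : ℕ, HCh k B M (n + 1) →ₗ[k] HCh k B M n) : Prop :=
  ∀ (n : ℕ) (m : M) (x : Fin (n + 1) → B),
    bd n (m ⊗ₜ[k] tp k (fun i => qbar k B (x i))) =
      r (x 0) m ⊗ₜ[k] tp k (fun i : Fin n => qbar k B (x i.succ))
      + (∑ i : Fin n, ((-1 : ℤ) ^ ((i : ℕ) + 1)) •
          (m ⊗ₜ[k] tp k (fun j => qbar k B (mulAt x i j))))
      + ((-1 : ℤ) ^ (n + 1)) •
          (l (x (Fin.last n)) m ⊗ₜ[k] tp k (fun i : Fin n => qbar k B (x i.castSucc)))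

variable (k) in
/-- The homology of a (not necessarily everywhere-defined) chain complex
`⋯ → C (n+1) → C n → ⋯ → C 0`; in degree `n+1` it is `ker (d n) / im (d (n+1))`, and in
degree `0` it is `C 0 / im (d 0)`. -/
def Hml {C : ℕ → Type} [∀ n, AddCommGroup (C n)] [∀ n, Module k (C n)]
    (d : ∀ n : ℕ, C (n + 1) →ₗ[k] C n) : ℕ → Type
  | 0 => C 0 ⧸ LinearMap.range (d 0)
  | n + 1 => LinearMap.ker (d n) ⧸
      (LinearMap.range (d (n + 1))).comap (LinearMap.ker (d n)).subtype

instance {C : ℕ → Type} [∀ n, AddCommGroup (C n)] [∀ n, Module k (C n)]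
    (d : ∀ n : ℕ, C (n + 1) →ₗ[k] C n) : ∀ n, AddCommGroup (Hml k d n)
  | 0 => inferInstanceAs (AddCommGroup (C 0 ⧸ LinearMap.range (d 0)))
  | n + 1 => inferInstanceAs (AddCommGroup (LinearMap.ker (d n) ⧸
      (LinearMap.range (d (n + 1))).comap (LinearMap.ker (d n)).subtype))

instance {C : ℕ → Type} [∀ n, AddCommGroup (C n)] [∀ n, Module k (C n)]
    (d : ∀ n : ℕ, C (n + 1) →ₗ[k] C n) : ∀ n, Module k (Hml k d n)
  | 0 => inferInstanceAs (Module k (C 0 ⧸ LinearMap.range (d 0)))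
  | n + 1 => inferInstanceAs (Module k (LinearMap.ker (d n) ⧸
      (LinearMap.range (d (n + 1))).comap (LinearMap.ker (d n)).subtype))

end Hochschild

section Conv

variable {A H : Type} [Ring A] [Algebra k A] [Ring H] [HopfAlgebra k H]

/-- `IsConvInverse f g` : `g` is the convolution inverse of `f` in the convolution
algebra `Hom_k(H ⊗ H, A)`, i.e. `f * g = g * f = ε ⊗ ε · 1_A`. -/
def IsConvInverse (f g : H →ₗ[k] H →ₗ[k] A) : Prop :=
  ∀ (h l : H) (N M' : ℕ) (u : Fin N → Fin 2 → H) (v : Fin M' → Fin 2 → H),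
    SRep k 1 h N u → SRep k 1 l M' v →
    (∑ i, ∑ j, f (u i 0) (v j 0) * g (u i 1) (v j 1)) =
        (Coalgebra.counit (R := k) h * Coalgebra.counit (R := k) l) • (1 : A) ∧
    (∑ i, ∑ j, g (u i 0) (v j 0) * f (u i 1) (v j 1)) =
        (Coalgebra.counit (R := k) h * Coalgebra.counit (R := k) l) • (1 : A)

variable {E : Type} [Ring E] [Algebra k E]

/-- The elementary term `f⁻¹(S(y), z) # S(x)` appearing in the formula for the
convolution inverse `(1 # h)⁻¹ = f⁻¹(S(h⁽²⁾), h⁽³⁾) # S(h⁽¹⁾)`. -/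
def ginv (S : CrossedProduct k A H E) (finv : H →ₗ[k] H →ₗ[k] A) (x y z : H) : E :=
  S.ι ((finv (HopfAlgebra.antipode (R := k) y) z) ⊗ₜ[k] HopfAlgebra.antipode (R := k) x)

end Conv

section Bar

variable {H : Type} [Ring H] [HopfAlgebra k H]

variable (k) in
/-- The degree-`s` part `H̄^{⊗s} ⊗ N` of the normalized bar complex computing
`H_*(H, N) = Tor_*^H(k, N)`, i.e. `(H̄^* ⊗ H, d_*) ⊗_H N`. -/
abbrev BarCh (N : Type) [AddCommGroup N] [Module k N] (s : ℕ) : Type :=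
  Tpow k (Qbar k H) s ⊗[k] N

variable (k) in
/-- `IsBarD act d` : `d` is the differential of the normalized bar complex computing the
homology `H_*(H, N)` of `H` with coefficients in the left `H`-module `N` (action `act`). -/
def IsBarD {N : Type} [AddCommGroup N] [Module k N] (act : H →ₗ[k] N →ₗ[k] N)
    (d : ∀ s : ℕ, BarCh k (H := H) N (s + 1) →ₗ[k] BarCh k (H := H) N s) : Prop :=
  ∀ (s : ℕ) (h : Fin (s + 1) → H) (n : N),
    d s (tp k (fun i => qbar k H (h i)) ⊗ₜ[k] n) =
      Coalgebra.counit (R := k) (h 0) •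
          (tp k (fun i : Fin s => qbar k H (h i.succ)) ⊗ₜ[k] n)
      + (∑ i : Fin s, ((-1 : ℤ) ^ ((i : ℕ) + 1)) •
          (tp k (fun j => qbar k H (mulAt h i j)) ⊗ₜ[k] n))
      + ((-1 : ℤ) ^ (s + 1)) •
          (tp k (fun i : Fin s => qbar k H (h i.castSucc)) ⊗ₜ[k] act (h (Fin.last s)) n)

end Bar

section Sep

variable {A : Type} [Ring A] [Algebra k A]

variable (k A) in
/-- `A` is a separable `k`-algebra: the multiplication map `A ⊗ A → A` admits an
`A`-bimodule splitting (equivalently, `A` is projective as an `A ⊗ Aᵒᵖ`-module). -/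
def IsSeparableAlg : Prop :=
  ∃ s : A →ₗ[k] A ⊗[k] A,
    (LinearMap.mul' k A) ∘ₗ s = LinearMap.id ∧
    ∀ (a b x : A), s (a * x * b) =
      TensorProduct.map (LinearMap.mulLeft k a) (LinearMap.mulRight k b) (s x)

end Sep


section Resolution

variable (k A H E : Type) [CommRing k] [Ring A] [Algebra k A] [Ring H] [HopfAlgebra k H]
  [Ring E] [Algebra k E]

/-- The `E`-bimodule `X_{rs} = E ⊗ H̄^{⊗s} ⊗ Ā^{⊗r} ⊗ E`. -/
abbrev Xc (r s : ℕ) : Type :=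
  E ⊗[k] (Tpow k (Qbar k H) s ⊗[k] (Tpow k (Qbar k A) r ⊗[k] E))

/-- The `E`-bimodule `Y_s = E ⊗ H̄^{⊗s} ⊗ H`. -/
abbrev Yc (s : ℕ) : Type := E ⊗[k] (Tpow k (Qbar k H) s ⊗[k] H)

variable {k A H E}

/-- The generator `e ⊗ h̄₁ ⊗ ⋯ ⊗ h̄ₛ ⊗ ā₁ ⊗ ⋯ ⊗ āᵣ ⊗ e'` of `X_{rs}`. -/
def xgen (e : E) {s r : ℕ} (hs : Fin s → H) (as : Fin r → A) (e' : E) : Xc k A H E r s :=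
  e ⊗ₜ[k] (tp k (fun i => qbar k H (hs i)) ⊗ₜ[k] (tp k (fun i => qbar k A (as i)) ⊗ₜ[k] e'))

/-- The generator `e ⊗ h̄₁ ⊗ ⋯ ⊗ h̄ₛ ⊗ h` of `Y_s`. -/
def ygen (e : E) {s : ℕ} (hs : Fin s → H) (h : H) : Yc k H E s :=
  e ⊗ₜ[k] (tp k (fun i => qbar k H (hs i)) ⊗ₜ[k] h)

/-- Left multiplication by `e ∈ E` on `X_{rs}`. -/
def lX (e : E) {r s : ℕ} : Xc k A H E r s →ₗ[k] Xc k A H E r s :=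
  TensorProduct.map (LinearMap.mulLeft k e) LinearMap.id

/-- Right multiplication by `e ∈ E` on `X_{rs}`. -/
def rX (e : E) {r s : ℕ} : Xc k A H E r s →ₗ[k] Xc k A H E r s :=
  TensorProduct.map LinearMap.id (TensorProduct.map LinearMap.id
    (TensorProduct.map LinearMap.id (LinearMap.mulRight k e)))

/-- Transport along equalities of indices. -/
def xcast {r r' s s' : ℕ} (hr : r = r') (hs : s = s') :
    Xc k A H E r s →ₗ[k] Xc k A H E r' s' := by
  subst hr; subst hs; exact LinearMap.id

end Resolution

section ResData

variable {k A H E : Type} [CommRing k] [Ring A] [Algebra k A] [Ring H] [HopfAlgebra k H]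
  [Ring E] [Algebra k E]

variable (k A H E) in
/-- The resolution `(X_*, d_*)` of the crossed product `E = A #_f H` of Section 1 of
the paper: the maps `μ_s`, `∂_s`, `σ⁰`, and the (higher) differentials `d^l_{rs}`
(`d⁰ = dl 0`), together with all of their defining equations.  Here
`dl l r s : X_{rs} → X_{r+l-1, s-l}`. -/
structure ResData (S : CrossedProduct k A H E) : Type where
  mu : ∀ s : ℕ, Xc k A H E 0 s →ₗ[k] Yc k H E s
  del : ∀ s : ℕ, Yc k H E (s + 1) →ₗ[k] Yc k H E s
  sig0 : ∀ s : ℕ, Yc k H E s →ₗ[k] Xc k A H E 0 s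
  sig : ∀ r s : ℕ, Xc k A H E r s →ₗ[k] Xc k A H E (r + 1) s
  dl : ∀ l r s : ℕ, Xc k A H E r s →ₗ[k] Xc k A H E (r + l - 1) (s - l)
  /-- `μ_s(a₀ ⊗ 𝐡_{0s} ⊗ a₁ ⊗ h_{s+1}) = a₀ a₁^{𝐡_{0s}⁽¹⁾} ⊗ 𝐡_{0s}⁽²⁾ ⊗ h_{s+1}`. -/
  mu_eq : ∀ (s : ℕ) (a₀ : A) (h₀ : H) (hs : Fin s → H) (b : A) (h' : H)
    (Nv : Fin (s + 1) → ℕ) (v : ∀ i, Fin (Nv i) → Fin 2 → H),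
    (∀ i, SRep k 1 ((Fin.cons h₀ hs : Fin (s + 1) → H) i) (Nv i) (v i)) →
    mu s (xgen (S.ι (a₀ ⊗ₜ[k] h₀)) hs (fun i : Fin 0 => i.elim0) (S.ι (b ⊗ₜ[k] h'))) =
      ∑ c : (∀ i, Fin (Nv i)),
        ygen (S.ι ((a₀ * iterAct k S.act (fun i => v i (c i) 0) b) ⊗ₜ[k] (v 0 (c 0) 1)))
          (fun i : Fin s => v i.succ (c i.succ) 1) h'
  /-- `d⁰_{rs}` is the Hochschild-type boundary in the `A`-direction. -/
  d0_eq : ∀ (r s : ℕ) (a₀ : A) (h₀ : H) (hs : Fin s → H) (as : Fin (r + 1) → A)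
    (b : A) (h' : H) (Nv : Fin (s + 1) → ℕ) (v : ∀ i, Fin (Nv i) → Fin 2 → H),
    (∀ i, SRep k 1 ((Fin.cons h₀ hs : Fin (s + 1) → H) i) (Nv i) (v i)) →
    dl 0 (r + 1) s (xgen (S.ι (a₀ ⊗ₜ[k] h₀)) hs as (S.ι (b ⊗ₜ[k] h'))) =
      (∑ c : (∀ i, Fin (Nv i)),
        xgen (S.ι ((a₀ * iterAct k S.act (fun i => v i (c i) 0) (as 0)) ⊗ₜ[k] (v 0 (c 0) 1)))
          (fun i : Fin s => v i.succ (c i.succ) 1)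
          (fun i : Fin r => as i.succ) (S.ι (b ⊗ₜ[k] h')))
      + (∑ i : Fin r, ((-1 : ℤ) ^ ((i : ℕ) + 1)) •
          xgen (S.ι (a₀ ⊗ₜ[k] h₀)) hs (mulAt as i) (S.ι (b ⊗ₜ[k] h')))
      + ((-1 : ℤ) ^ (r + 1)) •
          xgen (S.ι (a₀ ⊗ₜ[k] h₀)) hs (fun i : Fin r => as i.castSucc)
            (S.ι ((as (Fin.last r) * b) ⊗ₜ[k] h'))
  /-- `∂_s(a ⊗ 𝐡) = ∑ᵢ (-1)^{i+1} a f(hᵢ⁽¹⁾, hᵢ₊₁⁽¹⁾)^{𝐡_{0,i-1}⁽¹⁾} ⊗ 𝐡_{0,i-1}⁽²⁾ ⊗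
  hᵢ⁽²⁾hᵢ₊₁⁽²⁾ ⊗ 𝐡_{i+2,s+1}`. -/
  del_eq : ∀ (s : ℕ) (a : A) (h₀ : H) (hs : Fin (s + 1) → H) (h' : H)
    (Nv : Fin (s + 3) → ℕ) (v : ∀ i, Fin (Nv i) → Fin 2 → H),
    (∀ i, SRep k 1 ((Fin.cons h₀ (Fin.snoc hs h') : Fin (s + 3) → H) i) (Nv i) (v i)) →
    del s (ygen (S.ι (a ⊗ₜ[k] h₀)) hs h') =
      ∑ i : Fin (s + 2), ((-1 : ℤ) ^ ((i : ℕ) + 1)) •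
        (∑ c : (∀ j : Fin ((i : ℕ) + 2),
            Fin (Nv ⟨(j : ℕ), by have := j.isLt; have := i.isLt; omega⟩)),
          ygen
            (S.ι ((a * iterAct k S.act
                (fun j : Fin (i : ℕ) =>
                  v ⟨(j : ℕ), by have := j.isLt; have := i.isLt; omega⟩
                    (c ⟨(j : ℕ), by have := j.isLt; have := i.isLt; omega⟩) 0)
                (S.f (v ⟨(i : ℕ), by have := i.isLt; omega⟩
                        (c ⟨(i : ℕ), by omega⟩) 0)
                     (v ⟨(i : ℕ) + 1, by have := i.isLt; omega⟩
                        (c ⟨(i : ℕ) + 1, by omega⟩) 0))) ⊗ₜ[k]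
              (if (i : ℕ) = 0 then
                  (v ⟨0, by omega⟩ (c ⟨0, by omega⟩) 1) * (v ⟨1, by omega⟩ (c ⟨1, by omega⟩) 1)
                else v ⟨0, by omega⟩ (c ⟨0, by omega⟩) 1)))
            (fun p : Fin s =>
              if hp : (p : ℕ) + 1 < (i : ℕ) then
                v ⟨(p : ℕ) + 1, by have := p.isLt; have := i.isLt; omega⟩
                  (c ⟨(p : ℕ) + 1, by omega⟩) 1
              else if hp' : (p : ℕ) + 1 = (i : ℕ) then
                (v ⟨(p : ℕ) + 1, by have := p.isLt; omega⟩ (c ⟨(p : ℕ) + 1, by omega⟩) 1) *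
                  (v ⟨(p : ℕ) + 2, by have := p.isLt; have := i.isLt; omega⟩
                    (c ⟨(p : ℕ) + 2, by omega⟩) 1)
              else (Fin.cons h₀ (Fin.snoc hs h') : Fin (s + 3) → H) ⟨(p : ℕ) + 2, by have := p.isLt; omega⟩)
            (if hi : (i : ℕ) = s + 1 then
                (v ⟨s + 1, by omega⟩ (c ⟨s + 1, by omega⟩) 1) *
                  (v ⟨s + 2, by omega⟩ (c ⟨s + 2, by omega⟩) 1)
              else (Fin.cons h₀ (Fin.snoc hs h') : Fin (s + 3) → H) ⟨s + 2, by omega⟩))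
  /-- `σ⁰_{0,s}(a₀ ⊗ 𝐡 ⊗ h_{s+1}) = a₀ ⊗ 𝐡 ⊗ 1 # h_{s+1}`. -/
  sig0_eq : ∀ (s : ℕ) (e : E) (hs : Fin s → H) (h : H),
    sig0 s (ygen e hs h) = xgen e hs (fun i : Fin 0 => i.elim0) (S.hE h)
  /-- `σ⁰_{r+1,s}(a₀ ⊗ 𝐡 ⊗ 𝐚 ⊗ a # h) = (-1)^{r+1} a₀ ⊗ 𝐡 ⊗ 𝐚 ⊗ ā ⊗ 1 # h`. -/
  sig_eq : ∀ (r s : ℕ) (e : E) (hs : Fin s → H) (as : Fin r → A) (b : A) (h' : H),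
    sig r s (xgen e hs as (S.ι (b ⊗ₜ[k] h'))) =
      ((-1 : ℤ) ^ (r + 1)) • xgen e hs (Fin.snoc as b) (S.hE h')
  /-- `d¹_{0s} = -σ⁰ ∘ ∂ ∘ μ` on `k ⊗ H̄^s ⊗ k`. -/
  dl_one_zero : ∀ (s : ℕ) (hs : Fin (s + 1) → H),
    dl 1 0 (s + 1) (xgen (1 : E) hs (fun i : Fin 0 => i.elim0) (1 : E)) =
      - sig0 s (del s (mu (s + 1) (xgen (1 : E) hs (fun i : Fin 0 => i.elim0) (1 : E))))
  /-- `d^l_{0s} = -∑_{j=1}^{l-1} σ⁰ ∘ d^{l-j} ∘ d^j` on `k ⊗ H̄^s ⊗ k`, for `1 < l ≤ s`. -/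
  dl_zero : ∀ (l s : ℕ) (hl : 2 ≤ l) (hls : l ≤ s) (hs : Fin s → H),
    dl l 0 s (xgen (1 : E) hs (fun i : Fin 0 => i.elim0) (1 : E)) =
      - ∑ j : Fin (l - 1),
        xcast (show (l - 2) + 1 = 0 + l - 1 by omega) rfl
          (sig (l - 2) (s - l)
            (xcast
              (show (j : ℕ) + (l - ((j : ℕ) + 1)) - 1 = l - 2 by
                have := j.isLt; omega)
              (show (s - ((j : ℕ) + 1)) - (l - ((j : ℕ) + 1)) = s - l by
                have := j.isLt; omega)
              (dl (l - ((j : ℕ) + 1)) ((j : ℕ)) (s - ((j : ℕ) + 1))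
                (xcast (show 0 + ((j : ℕ) + 1) - 1 = (j : ℕ) by omega) rfl
                  (dl ((j : ℕ) + 1) 0 s
                    (xgen (1 : E) hs (fun i : Fin 0 => i.elim0) (1 : E)))))))
  /-- `d^l_{rs} = -∑_{j=0}^{l-1} σ⁰ ∘ d^{l-j} ∘ d^j` on `k ⊗ H̄^s ⊗ Ā^r ⊗ k`, for `r > 0`,
  `1 ≤ l ≤ s`. -/
  dl_succ : ∀ (l r s : ℕ) (hl : 1 ≤ l) (hls : l ≤ s) (hs : Fin s → H) (as : Fin (r + 1) → A),
    dl l (r + 1) s (xgen (1 : E) hs as (1 : E)) =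
      - ∑ j : Fin l,
        xcast (show (r + l - 1) + 1 = (r + 1) + l - 1 by omega) rfl
          (sig (r + l - 1) (s - l)
            (xcast
              (show (r + (j : ℕ)) + (l - (j : ℕ)) - 1 = r + l - 1 by
                have := j.isLt; omega)
              (show (s - (j : ℕ)) - (l - (j : ℕ)) = s - l by
                have := j.isLt; omega)
              (dl (l - (j : ℕ)) (r + (j : ℕ)) (s - (j : ℕ))
                (xcast (show (r + 1) + (j : ℕ) - 1 = r + (j : ℕ) by omega) rfl
                  (dl (j : ℕ) (r + 1) s (xgen (1 : E) hs as (1 : E)))))))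
  /-- Each `d^l_{rs}` is a map of `E`-bimodules. -/
  dl_lmul : ∀ (l r s : ℕ) (e : E), dl l r s ∘ₗ lX e = lX e ∘ₗ dl l r s
  dl_rmul : ∀ (l r s : ℕ) (e : E), dl l r s ∘ₗ rX e = rX e ∘ₗ dl l r s

end ResData

section Xtot

variable {k A H E : Type} [CommRing k] [Ring A] [Algebra k A] [Ring H] [HopfAlgebra k H]
  [Ring E] [Algebra k E]

variable (k A H E) in
/-- The total module `X_n = ⊕_{r+s=n} X_{rs}`. -/
abbrev XT (n : ℕ) : Type :=
  ⨁ (s : Fin (n + 1)), Xc k A H E (n - (s : ℕ)) (s : ℕ)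

/-- The total differential `d_n = ∑_{r+s=n, r+l>0} ∑_{l=0}^{s} d^l_{rs}`. -/
noncomputable def dT {S : CrossedProduct k A H E} (R : ResData k A H E S) (n : ℕ) :
    XT k A H E (n + 1) →ₗ[k] XT k A H E n :=
  DirectSum.toModule k (Fin (n + 2)) (XT k A H E n) (fun s =>
    ∑ l : Fin ((s : ℕ) + 1),
      if h : 0 < (n + 1 - (s : ℕ)) + (l : ℕ) then
        (DirectSum.lof k (Fin (n + 1)) (fun s' : Fin (n + 1) => Xc k A H E (n - (s' : ℕ)) (s' : ℕ))
            ⟨(s : ℕ) - (l : ℕ), by have := s.isLt; have := l.isLt; omega⟩) ∘ₗ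
          xcast
            (show (n + 1 - (s : ℕ)) + (l : ℕ) - 1 = n - ((s : ℕ) - (l : ℕ)) by
              have := s.isLt; have := l.isLt; omega)
            rfl ∘ₗ
          R.dl (l : ℕ) (n + 1 - (s : ℕ)) (s : ℕ)
      else 0)

/-- Left multiplication by `e ∈ E` on `X_n`. -/
noncomputable def lT (e : E) (n : ℕ) : XT k A H E n →ₗ[k] XT k A H E n :=
  DirectSum.toModule k (Fin (n + 1)) (XT k A H E n) (fun s =>
    (DirectSum.lof k (Fin (n + 1)) (fun s' : Fin (n + 1) => Xc k A H E (n - (s' : ℕ)) (s' : ℕ)) s)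
      ∘ₗ lX e)

/-- Right multiplication by `e ∈ E` on `X_n`. -/
noncomputable def rT (e : E) (n : ℕ) : XT k A H E n →ₗ[k] XT k A H E n :=
  DirectSum.toModule k (Fin (n + 1)) (XT k A H E n) (fun s =>
    (DirectSum.lof k (Fin (n + 1)) (fun s' : Fin (n + 1) => Xc k A H E (n - (s' : ℕ)) (s' : ℕ)) s)
      ∘ₗ rX e)

/-- The augmentation `X_0 → E` induced by a map `μ : X_{00} → E`. -/
noncomputable def multT (mult : Xc k A H E 0 0 →ₗ[k] E) : XT k A H E 0 →ₗ[k] E :=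
  DirectSum.toModule k (Fin 1) E (fun s =>
    mult ∘ₗ xcast (show 0 - (s : ℕ) = 0 by have := s.isLt; omega)
      (show (s : ℕ) = 0 by have := s.isLt; omega))

end Xtot


section TpowBasics
variable {k V M : Type} [CommRing k] [AddCommGroup V] [Module k V] [AddCommGroup M] [Module k M]

def tcons {n : ℕ} : V →ₗ[k] Tpow k V n →ₗ[k] Tpow k V (n + 1) :=
  TensorProduct.mk k V (Tpow k V n)

def tlift {n : ℕ} : (V →ₗ[k] Tpow k V n →ₗ[k] M) →ₗ[k] (Tpow k V (n + 1) →ₗ[k] M) :=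
  TensorProduct.uncurry (RingHom.id k) V (Tpow k V n) M

theorem tlift_tcons {n : ℕ} (f : V →ₗ[k] Tpow k V n →ₗ[k] M) (v : V) (t : Tpow k V n) :
    tlift f (tcons v t) = f v t := rfl

theorem tp_succ {n : ℕ} (v : Fin (n + 1) → V) :
    tp k v = tcons (v 0) (tp k fun i => v i.succ) := rfl

theorem tp_cons {n : ℕ} (x : V) (v : Fin n → V) :
    tp k (Fin.cons x v : Fin (n + 1) → V) = tcons x (tp k v) := rfl

def tone : Tpow k V 0 := (1 : k)

theorem tp_zero (v : Fin 0 → V) : tp k v = tone := rfl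

theorem t0_eq (t : Tpow k V 0) : ∃ c : k, t = c • tone := ⟨t, (mul_one (M := k) t).symm⟩

def t0L : M →ₗ[k] (Tpow k V 0 →ₗ[k] M) := (LinearMap.lsmul k M).flip

theorem t0L_tone (m : M) : t0L (V := V) (k := k) m tone = m := one_smul k m

theorem t0_ext {f g : Tpow k V 0 →ₗ[k] M} (h : f tone = g tone) : f = g := by
  refine LinearMap.ext fun t => ?_
  obtain ⟨c, rfl⟩ := t0_eq t
  rw [map_smul, map_smul, h]

theorem tS_ext {n : ℕ} {f g : Tpow k V (n + 1) →ₗ[k] M}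
    (h : ∀ v t, f (tcons v t) = g (tcons v t)) : f = g := by
  exact TensorProduct.ext' (M := V) (N := Tpow k V n) h

theorem tp_ext {n : ℕ} {f g : Tpow k V n →ₗ[k] M} (h : ∀ v, f (tp k v) = g (tp k v)) : f = g := by
  induction n with
  | zero => exact t0_ext (h Fin.elim0)
  | succ n ih =>
    apply tS_ext
    intro v t
    have : f ∘ₗ tcons v = g ∘ₗ tcons v := by
      apply ih
      intro w
      exact h (Fin.cons v w)
    exact LinearMap.congr_fun this t

theorem tS_ind {n : ℕ} {P : Tpow k V (n + 1) → Prop} (h0 : P 0)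
    (h1 : ∀ v t, P (tcons v t)) (h2 : ∀ a b, P a → P b → P (a + b)) (x : Tpow k V (n + 1)) : P x :=
  TensorProduct.induction_on (M := V) (N := Tpow k V n) (motive := P) x h0 h1 h2

theorem tp_repr {n : ℕ} (x : Tpow k V (n + 1)) :
    ∃ (N : ℕ) (u : Fin N → Fin (n + 1) → V), x = ∑ i, tp k (u i) := by
  have hz : ∀ n : ℕ, ∃ (N : ℕ) (u : Fin N → Fin (n + 1) → V), (0 : Tpow k V (n+1)) = ∑ i, tp k (u i) :=
    fun n => ⟨0, Fin.elim0, by simp⟩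
  have ha : ∀ (n : ℕ) (x y : Tpow k V (n+1)),
     (∃ (N : ℕ) (u : Fin N → Fin (n + 1) → V), x = ∑ i, tp k (u i)) →
     (∃ (N : ℕ) (u : Fin N → Fin (n + 1) → V), y = ∑ i, tp k (u i)) →
     (∃ (N : ℕ) (u : Fin N → Fin (n + 1) → V), x + y = ∑ i, tp k (u i)) := by
    rintro n _ _ ⟨N, u, rfl⟩ ⟨N', u', rfl⟩
    refine ⟨N + N', Fin.append u u', ?_⟩
    simp [Fin.sum_univ_add]
  induction n with
  | zero =>
    refine tS_ind (hz 0) ?_ (ha 0) x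
    intro v t
    obtain ⟨c, rfl⟩ := t0_eq t
    refine ⟨1, fun _ _ => c • v, ?_⟩
    simp [tp_succ, tp_zero]
  | succ n ih =>
    refine tS_ind (hz _) ?_ (ha _) x
    intro v t
    obtain ⟨N, u, rfl⟩ := ih t
    refine ⟨N, fun i => Fin.cons v (u i), ?_⟩
    rw [map_sum]
    rfl

def ev1 : (V →ₗ[k] M) →ₗ[k] (Tpow k V 1 →ₗ[k] M) := tlift ∘ₗ LinearMap.compRight k t0L
def ev2 : (V →ₗ[k] V →ₗ[k] M) →ₗ[k] (Tpow k V 2 →ₗ[k] M) := tlift ∘ₗ LinearMap.compRight k ev1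
def ev3 : (V →ₗ[k] V →ₗ[k] V →ₗ[k] M) →ₗ[k] (Tpow k V 3 →ₗ[k] M) :=
  tlift ∘ₗ LinearMap.compRight k ev2

theorem ev1_c (f : V →ₗ[k] M) (x : V) : ev1 f (tcons x tone) = f x := by
  exact t0L_tone (k := k) (V := V) (f x)
theorem ev2_c (f : V →ₗ[k] V →ₗ[k] M) (x : V) (t) : ev2 f (tcons x t) = ev1 (f x) t := rfl
theorem ev3_c (f : V →ₗ[k] V →ₗ[k] V →ₗ[k] M) (x : V) (t) : ev3 f (tcons x t) = ev2 (f x) t := rfl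

end TpowBasics

section Prod
variable {k A H E M : Type} [CommRing k] [Ring A] [Algebra k A] [Ring H] [HopfAlgebra k H]
  [Ring E] [Algebra k E] [AddCommGroup M] [Module k M]

theorem exists_SRep (n : ℕ) (h : H) : ∃ (N : ℕ) (u : Fin N → Fin (n + 1) → H), SRep k n h N u :=
  tp_repr _

theorem itc_zero (h : H) : itComul k 0 h = tcons h tone := rfl

theorem itc_succ (n : ℕ) (h : H) : itComul k (n+1) h =
   TensorProduct.lift (LinearMap.lcomp k _ (itComul k n) ∘ₗ tcons) (Coalgebra.comul (R := k) h) := by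
  have : (TensorProduct.map LinearMap.id (itComul k n) : H ⊗[k] H →ₗ[k] Tpow k H (n+2)) =
    TensorProduct.lift (LinearMap.lcomp k _ (itComul k n) ∘ₗ tcons) := by
    apply TensorProduct.ext'
    intro x y
    rfl
  exact LinearMap.congr_fun this _

theorem ev2_itc (B : H →ₗ[k] H →ₗ[k] M) (h : H) :
    ev2 B (itComul k 1 h) = TensorProduct.lift B (Coalgebra.comul (R := k) h) := by
  rw [itc_succ, ← LinearMap.comp_apply]
  congr 1
  apply TensorProduct.ext'
  intro x y
  exact t0L_tone (k := k) (V := H) (B x y)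

theorem ev3_itc (T : H →ₗ[k] H →ₗ[k] H →ₗ[k] M) (h : H) :
    ev3 T (itComul k 2 h) = TensorProduct.lift
      ((LinearMap.lcomp k M (Coalgebra.comul (R := k) (A := H))) ∘ₗ TensorProduct.uncurry (RingHom.id k) H H M ∘ₗ T)
       (Coalgebra.comul (R := k) h) := by
  rw [itc_succ, ← LinearMap.comp_apply]
  congr 1
  apply TensorProduct.ext'
  intro x y
  exact ev2_itc (T x) y

theorem SRep2_sum {h : H} {N : ℕ} {v : Fin N → Fin 2 → H} (hv : SRep k 1 h N v)
    (B : H →ₗ[k] H →ₗ[k] M) :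
    ∑ i, B (v i 0) (v i 1) = TensorProduct.lift B (Coalgebra.comul (R := k) h) := by
  rw [← ev2_itc, hv, map_sum]
  refine Finset.sum_congr rfl fun i _ => ?_
  rw [tp_succ, tp_succ, tp_zero, ev2_c, ev1_c]; rfl

theorem SRep3_sum {h : H} {N : ℕ} {v : Fin N → Fin 3 → H} (hv : SRep k 2 h N v)
    (T : H →ₗ[k] H →ₗ[k] H →ₗ[k] M) :
    ∑ i, T (v i 0) (v i 1) (v i 2) = TensorProduct.lift
      ((LinearMap.lcomp k M (Coalgebra.comul (R := k) (A := H))) ∘ₗ TensorProduct.uncurry (RingHom.id k) H H M ∘ₗ T)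
       (Coalgebra.comul (R := k) h) := by
  rw [← ev3_itc, hv, map_sum]
  refine Finset.sum_congr rfl fun i _ => ?_
  rw [tp_succ, tp_succ, tp_succ, tp_zero, ev3_c, ev2_c, ev1_c]; rfl

theorem lift_counit_left (L : H →ₗ[k] M) (y : H) :
    TensorProduct.lift (LinearMap.smulRight (Coalgebra.counit (R := k) (A := H)) L) (Coalgebra.comul (R := k) y) = L y := by
  have h1 := Coalgebra.rTensor_counit_comul (R := k) y
  have h2 : TensorProduct.lift (LinearMap.smulRight (Coalgebra.counit (R := k) (A := H)) L) =
     L ∘ₗ (TensorProduct.lid k H).toLinearMap ∘ₗ LinearMap.rTensor H (Coalgebra.counit (R := k)) := by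
    apply TensorProduct.ext'
    intro a b
    simp
  rw [h2, LinearMap.comp_apply, LinearMap.comp_apply, h1]
  simp

/-- counit in the middle -/
theorem SRep_mid {h : H} {N N' : ℕ} {u : Fin N' → Fin 3 → H} {v : Fin N → Fin 2 → H} (hu : SRep k 2 h N' u)
    (hv : SRep k 1 h N v) (B : H →ₗ[k] H →ₗ[k] M) :
    ∑ i, Coalgebra.counit (R := k) (u i 1) • B (u i 0) (u i 2) = ∑ i, B (v i 0) (v i 1) := by
  rw [SRep2_sum hv]
  have := SRep3_sum hu (LinearMap.smulRightₗ (Coalgebra.counit (R := k) (A := H)) ∘ₗ B)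
  refine this.trans ?_
  congr 1
  congr 1
  ext x y
  exact lift_counit_left (B x) y

theorem SRep_left {h : H} {N N' : ℕ} {u : Fin N' → Fin 3 → H} {v : Fin N → Fin 2 → H} (hu : SRep k 2 h N' u)
    (hv : SRep k 1 h N v) (B : H →ₗ[k] H →ₗ[k] M) :
    ∑ i, Coalgebra.counit (R := k) (u i 0) • B (u i 1) (u i 2) = ∑ i, B (v i 0) (v i 1) := by
  rw [SRep2_sum hv]
  have := SRep3_sum hu (LinearMap.smulRight (Coalgebra.counit (R := k) (A := H)) B)
  refine this.trans ?_
  refine Eq.trans ?_ (lift_counit_left (TensorProduct.lift B ∘ₗ Coalgebra.comul (R := k) (A := H)) h)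
  congr 1
  congr 1
  ext x y
  simp only [LinearMap.comp_apply, LinearMap.smulRight_apply, LinearMap.lcomp_apply, map_smul, LinearMap.smul_apply]
  rfl

theorem SRep_counit {h : H} {N : ℕ} {v : Fin N → Fin 2 → H} 
    (hv : SRep k 1 h N v) (L : H →ₗ[k] M) :
    ∑ i, Coalgebra.counit (R := k) (v i 0) • L (v i 1) = L h := by
  rw [← lift_counit_left L h, ← SRep2_sum hv]
  rfl

theorem itc_one (n : ℕ) : itComul k (n+1) (1 : H) = tcons 1 (itComul k n 1) := by
  rw [itc_succ, Bialgebra.comul_one]; rfl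

theorem SRep_one : SRep k 1 (1 : H) 1 (fun _ _ => 1) := by
  unfold SRep
  rw [itc_one, itc_zero]; simp; rfl

theorem SRep_one2 : SRep k 2 (1 : H) 1 (fun _ _ => 1) := by
  unfold SRep
  rw [itc_one, itc_one, itc_zero]; simp; rfl

variable (S : CrossedProduct k A H E)

theorem aE_apply (a : A) : S.aE a = S.ι (a ⊗ₜ[k] 1) := rfl
theorem hE_apply (h : H) : S.hE h = S.ι (1 ⊗ₜ[k] h) := rfl

theorem ι_mul_aE (a b : A) (h : H) {N : ℕ} {v : Fin N → Fin 2 → H} (hv : SRep k 1 h N v) :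
    S.ι (a ⊗ₜ[k] h) * S.aE b = ∑ i, S.ι ((a * S.act (v i 0) b) ⊗ₜ[k] (v i 1)) := by
  obtain ⟨M, u, hu⟩ := exists_SRep (k := k) 2 h
  rw [aE_apply, S.ι_mul a b h 1 M 1 u _ hu SRep_one]
  have := SRep_mid hu hv ((LinearMap.compRight k S.ι.toLinearMap) ∘ₗ (TensorProduct.mk k A H) ∘ₗ (LinearMap.mulLeft k a) ∘ₗ S.act.flip b)
  refine Eq.trans ?_ this
  refine Finset.sum_congr rfl fun i _ => ?_
  simp only [Finset.univ_unique, Finset.sum_singleton, mul_one, (S.f_normal _).1]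
  simp
  try rw [← TensorProduct.smul_tmul', map_smul]

theorem hE_mul_hE (h l : H) {N M : ℕ} {v : Fin N → Fin 2 → H} {w : Fin M → Fin 2 → H}
    (hv : SRep k 1 h N v) (hw : SRep k 1 l M w) :
    S.hE h * S.hE l = ∑ i, ∑ j, S.ι (S.f (v i 0) (w j 0) ⊗ₜ[k] (v i 1 * w j 1)) := by
  obtain ⟨K, u, hu⟩ := exists_SRep (k := k) 2 h
  rw [hE_apply, hE_apply, S.ι_mul 1 1 h l K M u w hu hw]
  rw [Finset.sum_comm, Finset.sum_comm (γ := Fin N)]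
  refine Finset.sum_congr rfl fun j _ => ?_
  have := SRep_left hu hv ((LinearMap.compRight k S.ι.toLinearMap) ∘ₗ (LinearMap.lcomp k _ (LinearMap.mulRight k (w j 1))) ∘ₗ (TensorProduct.mk k A H) ∘ₗ S.f.flip (w j 0))
  refine Eq.trans ?_ this
  refine Finset.sum_congr rfl fun i _ => ?_
  rw [S.act_one]
  simp
  try rw [← TensorProduct.smul_tmul', map_smul]

theorem aE_mul (a b : A) (l : H) : S.aE a * S.ι (b ⊗ₜ[k] l) = S.ι ((a * b) ⊗ₜ[k] l) := by
  obtain ⟨M, w, hw⟩ := exists_SRep (k := k) 1 l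
  rw [aE_apply, S.ι_mul a b 1 l 1 M _ w SRep_one2 hw]
  simp only [Finset.univ_unique, Finset.sum_singleton, S.one_act, one_mul, (S.f_normal _).2]
  have := SRep_counit hw (S.ι.toLinearMap ∘ₗ TensorProduct.mk k A H (a * b))
  refine Eq.trans ?_ this
  refine Finset.sum_congr rfl fun i _ => ?_
  simp
  try rw [← TensorProduct.smul_tmul', map_smul]

theorem aE_mul_hE (a : A) (h : H) : S.aE a * S.hE h = S.ι (a ⊗ₜ[k] h) := by
  rw [hE_apply, aE_mul, mul_one]

theorem aE_mul_aE (a b : A) : S.aE a * S.aE b = S.aE (a * b) := aE_mul S a b 1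

theorem aE_one : S.aE 1 = 1 := S.ι_one
theorem hE_one : S.hE 1 = 1 := S.ι_one

theorem ι_mul_hE (a : A) (h l : H) {N M : ℕ} {v : Fin N → Fin 2 → H} {w : Fin M → Fin 2 → H}
    (hv : SRep k 1 h N v) (hw : SRep k 1 l M w) :
    S.ι (a ⊗ₜ[k] h) * S.hE l = ∑ i, ∑ j, S.ι ((a * S.f (v i 0) (w j 0)) ⊗ₜ[k] (v i 1 * w j 1)) := by
  rw [← aE_mul_hE, mul_assoc, hE_mul_hE S h l hv hw, Finset.mul_sum]
  simp only [Finset.mul_sum, aE_mul]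

end Prod

section ZZ
variable {k A H E W W' M : Type} [CommRing k] [Ring A] [Algebra k A] [Ring H] [HopfAlgebra k H]
  [Ring E] [Algebra k E] [AddCommGroup W] [Module k W] [AddCommGroup W'] [Module k W'] [AddCommGroup M] [Module k M]

variable (k H E W) in
abbrev Zc (s : ℕ) : Type := E ⊗[k] (Tpow k (Qbar k H) s ⊗[k] W)

def zmk {s : ℕ} (e : E) (t : Tpow k (Qbar k H) s) (w : W) : Zc k H E W s := e ⊗ₜ[k] (t ⊗ₜ[k] w)

def zlift {s : ℕ} (F : E →ₗ[k] Tpow k (Qbar k H) s →ₗ[k] W →ₗ[k] M) : Zc k H E W s →ₗ[k] M :=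
  TensorProduct.lift (TensorProduct.uncurry (RingHom.id k) _ _ _ ∘ₗ F)

theorem zlift_zmk {s : ℕ} (F : E →ₗ[k] Tpow k (Qbar k H) s →ₗ[k] W →ₗ[k] M) (e t w) :
   zlift F (zmk e t w) = F e t w := rfl

theorem zmk_add {s : ℕ} (e e' : E) (t : Tpow k (Qbar k H) s) (w : W) :
    zmk (e + e') t w = zmk e t w + zmk e' t w := TensorProduct.add_tmul _ _ _
theorem zmk_sum {s : ℕ} {ι : Type} (I : Finset ι) (e : ι → E) (t : Tpow k (Qbar k H) s) (w : W) :
    zmk (∑ i ∈ I, e i) t w = ∑ i ∈ I, zmk (e i) t w := TensorProduct.sum_tmul _ _ _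
theorem zmk_sum_r {s : ℕ} {ι : Type} (I : Finset ι) (e : E) (t : Tpow k (Qbar k H) s) (w : ι → W) :
    zmk e t (∑ i ∈ I, w i) = ∑ i ∈ I, zmk e t (w i) := by
  unfold zmk
  rw [TensorProduct.tmul_sum, TensorProduct.tmul_sum]
theorem zmk_neg {s : ℕ} (e : E) (t : Tpow k (Qbar k H) s) (w : W) :
    zmk (-e) t w = - zmk e t w := TensorProduct.neg_tmul _ _

theorem z_ext {s : ℕ} {f g : Zc k H E W s →ₗ[k] M} (h : ∀ e t w, f (zmk e t w) = g (zmk e t w)) : f = g := by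
  apply TensorProduct.ext
  refine LinearMap.ext fun e => ?_
  apply TensorProduct.ext'
  exact h e

theorem z_ext_ι (S : CrossedProduct k A H E) {s : ℕ} {f g : Zc k H E W s →ₗ[k] M}
   (h : ∀ a x t w, f (zmk (S.ι (a ⊗ₜ[k] x)) t w) = g (zmk (S.ι (a ⊗ₜ[k] x)) t w)) : f = g := by
  apply z_ext
  intro e t w
  have : (f ∘ₗ (TensorProduct.mk k E _).flip (t ⊗ₜ[k] w)) ∘ₗ S.ι.toLinearMap =
     (g ∘ₗ (TensorProduct.mk k E _).flip (t ⊗ₜ[k] w)) ∘ₗ S.ι.toLinearMap := by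
    apply TensorProduct.ext'
    intro a x
    exact h a x t w
  have h2 := LinearMap.congr_fun this (S.ι.symm e)
  simp only [LinearMap.comp_apply, LinearEquiv.coe_coe, LinearEquiv.apply_symm_apply] at h2
  exact h2

theorem z_ext_tp {s : ℕ} {f g : Zc k H E W s →ₗ[k] M}
   (h : ∀ e (hs : Fin s → H) w, f (zmk e (tp k fun i => qbar k H (hs i)) w) = g (zmk e (tp k fun i => qbar k H (hs i)) w)) : f = g := by
  apply z_ext
  intro e t w
  have : (f ∘ₗ TensorProduct.mk k E _ e) ∘ₗ (TensorProduct.mk k _ W).flip w =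
    (g ∘ₗ TensorProduct.mk k E _ e) ∘ₗ (TensorProduct.mk k _ W).flip w := by
    apply tp_ext
    intro v
    choose hs hhs using fun i => Submodule.mkQ_surjective (unitSub k H) (v i)
    have hh := h e hs w
    have hv : (fun i => qbar k H (hs i)) = v := funext hhs
    rw [hv] at hh
    exact hh
  exact LinearMap.congr_fun this t

theorem z_ext_tp_ι (S : CrossedProduct k A H E) {s : ℕ} {f g : Zc k H E W s →ₗ[k] M}
   (h : ∀ a x (hs : Fin s → H) w, f (zmk (S.ι (a ⊗ₜ[k] x)) (tp k fun i => qbar k H (hs i)) w)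
     = g (zmk (S.ι (a ⊗ₜ[k] x)) (tp k fun i => qbar k H (hs i)) w)) : f = g := by
  apply z_ext_tp
  intro e hs w
  have : (f ∘ₗ (TensorProduct.mk k E _).flip ((tp k fun i => qbar k H (hs i)) ⊗ₜ[k] w)) ∘ₗ S.ι.toLinearMap =
     (g ∘ₗ (TensorProduct.mk k E _).flip ((tp k fun i => qbar k H (hs i)) ⊗ₜ[k] w)) ∘ₗ S.ι.toLinearMap := by
    apply TensorProduct.ext'
    intro a x
    exact h a x hs w
  have h2 := LinearMap.congr_fun this (S.ι.symm e)
  simp only [LinearMap.comp_apply, LinearEquiv.coe_coe, LinearEquiv.apply_symm_apply] at h2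
  exact h2

def lZ (e : E) {s : ℕ} : Zc k H E W s →ₗ[k] Zc k H E W s :=
  TensorProduct.map (LinearMap.mulLeft k e) LinearMap.id

theorem lZ_zmk (e e' : E) {s : ℕ} (t : Tpow k (Qbar k H) s) (w : W) : lZ e (zmk e' t w) = zmk (e * e') t w := rfl

theorem lZ_lZ (e e' : E) {s : ℕ} (z : Zc k H E W s) : lZ e (lZ e' z) = lZ (e * e') z := by
  have : (lZ e ∘ₗ lZ e' : Zc k H E W s →ₗ[k] Zc k H E W s) = lZ (e * e') := by
    apply z_ext
    intro x t w
    simp only [LinearMap.comp_apply, lZ_zmk, mul_assoc]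
  exact LinearMap.congr_fun this z

theorem lZ_one {s : ℕ} (z : Zc k H E W s) : lZ 1 z = z := by
  have : (lZ 1 : Zc k H E W s →ₗ[k] Zc k H E W s) = LinearMap.id := by
    apply z_ext
    intro x t w
    simp only [lZ_zmk, one_mul, LinearMap.id_apply]
  exact LinearMap.congr_fun this z

theorem lZ_add (e e' : E) {s : ℕ} (z : Zc k H E W s) : lZ (e + e') z = lZ e z + lZ e' z := by
  have : (lZ (e + e') : Zc k H E W s →ₗ[k] Zc k H E W s) = lZ e + lZ e' := by
    apply z_ext
    intro x t w
    simp only [LinearMap.add_apply, lZ_zmk, add_mul, zmk_add]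
  exact LinearMap.congr_fun this z

def wmap {s : ℕ} (F : W →ₗ[k] W') : Zc k H E W s →ₗ[k] Zc k H E W' s :=
  TensorProduct.map LinearMap.id (TensorProduct.map LinearMap.id F)
theorem wmap_zmk {s : ℕ} (F : W →ₗ[k] W') (e : E) (t : Tpow k (Qbar k H) s) (w : W) :
   wmap F (zmk e t w) = zmk e t (F w) := rfl

variable (S : CrossedProduct k A H E)

def jz0 {s : ℕ} : A →ₗ[k] H →ₗ[k] ((Tpow k (Qbar k H) s ⊗[k] W) →ₗ[k] Zc k H E W (s+1)) :=
  LinearMap.mk₂ k (fun a h => TensorProduct.mk k E _ (S.aE a) ∘ₗ TensorProduct.map (tcons (qbar k H h)) LinearMap.id)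
   (by intro a b h; simp only [map_add, LinearMap.add_comp])
   (by intro c a h; simp only [map_smul, LinearMap.smul_comp])
   (by intro a h l; simp only [map_add, TensorProduct.map_add_left, LinearMap.comp_add])
   (by intro c a h; simp only [map_smul, TensorProduct.map_smul_left, LinearMap.comp_smul])

/-- the shift `j` -/
def jz {s : ℕ} : Zc k H E W s →ₗ[k] Zc k H E W (s+1) :=
  TensorProduct.lift (TensorProduct.lift (jz0 S) ∘ₗ S.ι.symm.toLinearMap)

theorem jz_ι {s : ℕ} (a : A) (h : H) (t : Tpow k (Qbar k H) s) (w : W) :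
    jz S (zmk (S.ι (a ⊗ₜ[k] h)) t w) = zmk (S.aE a) (tcons (qbar k H h) t) w := by
  have : jz S (zmk (S.ι (a ⊗ₜ[k] h)) t w) = TensorProduct.lift (jz0 S) (S.ι.symm (S.ι (a ⊗ₜ[k] h))) (t ⊗ₜ[k] w) := rfl
  rw [this, LinearEquiv.symm_apply_apply]
  rfl

theorem jz_hE {s : ℕ} (h : H) (t : Tpow k (Qbar k H) s) (w : W) :
    jz S (zmk (S.hE h) t w) = zmk 1 (tcons (qbar k H h) t) w := by
  rw [hE_apply, jz_ι, aE_one]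

theorem jz_aE {s : ℕ} (a : A) (z : Zc k H E W s) : jz S (lZ (S.aE a) z) = lZ (S.aE a) (jz S z) := by
  have : jz S ∘ₗ lZ (S.aE a) = lZ (S.aE a) ∘ₗ jz S (W := W) (s := s) := by
    apply z_ext_ι S
    intro b x t w
    simp only [LinearMap.comp_apply, lZ_zmk, jz_ι, aE_mul, aE_mul_aE]
  exact LinearMap.congr_fun this z

theorem jz_wmap {s : ℕ} (F : W →ₗ[k] W') (z : Zc k H E W s) : jz S (wmap F z) = wmap F (jz S z) := by
  have : jz S ∘ₗ wmap F = wmap F ∘ₗ jz S (W := W) (s := s) := by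
    apply z_ext_ι S
    intro b x t w
    simp only [LinearMap.comp_apply, wmap_zmk, jz_ι]
  exact LinearMap.congr_fun this z

theorem wmap_lZ {s : ℕ} (F : W →ₗ[k] W') (e : E) (z : Zc k H E W s) : wmap F (lZ e z) = lZ e (wmap F z) := by
  have : wmap F ∘ₗ lZ e = lZ e ∘ₗ wmap F (W := W) (H := H) (s := s) := by
    apply z_ext
    intro b t w
    rfl
  exact LinearMap.congr_fun this z

theorem zmk_tcons {s : ℕ} (e : E) (h : H) (t : Tpow k (Qbar k H) s) (w : W) :
    zmk e (tcons (qbar k H h) t) w = lZ e (jz S (zmk (S.hE h) t w)) := by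
  rw [jz_hE, lZ_zmk, mul_one]

theorem zS_ext {s : ℕ} {f g : Zc k H E W (s+1) →ₗ[k] M}
    (h : ∀ e x t w, f (lZ e (jz S (zmk (S.hE x) t w))) = g (lZ e (jz S (zmk (S.hE x) t w)))) : f = g := by
  apply z_ext
  intro e t w
  have : (f ∘ₗ TensorProduct.mk k E _ e) ∘ₗ (TensorProduct.mk k _ W).flip w =
    (g ∘ₗ TensorProduct.mk k E _ e) ∘ₗ (TensorProduct.mk k _ W).flip w := by
    apply tS_ext
    intro v t
    obtain ⟨x, rfl⟩ := Submodule.mkQ_surjective (unitSub k H) v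
    have hh := h e x t w
    rw [← zmk_tcons] at hh
    exact hh
  exact LinearMap.congr_fun this t

theorem zS_ext' {s : ℕ} {f g : Zc k H E W (s+1) →ₗ[k] M}
    (h : ∀ e z, f (lZ e (jz S z)) = g (lZ e (jz S z))) : f = g := zS_ext S fun e _ _ _ => h e _

theorem z0_ext {f g : Zc k H E W 0 →ₗ[k] M}
    (h : ∀ e w, f (zmk e tone w) = g (zmk e tone w)) : f = g := by
  apply z_ext
  intro e t w
  have : (f ∘ₗ TensorProduct.mk k E _ e) ∘ₗ (TensorProduct.mk k _ W).flip w =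
    (g ∘ₗ TensorProduct.mk k E _ e) ∘ₗ (TensorProduct.mk k _ W).flip w := by
    apply t0_ext
    exact h e w
  exact LinearMap.congr_fun this t

/-- `j_{-1}` -/
def jm : E →ₗ[k] Zc k H E H 0 :=
  TensorProduct.map S.aE (TensorProduct.mk k (Tpow k (Qbar k H) 0) H tone) ∘ₗ S.ι.symm.toLinearMap

theorem jm_ι (a : A) (h : H) : jm S (S.ι (a ⊗ₜ[k] h)) = zmk (S.aE a) tone h := by
  have : jm S (S.ι (a ⊗ₜ[k] h)) = TensorProduct.map S.aE (TensorProduct.mk k (Tpow k (Qbar k H) 0) H tone) (S.ι.symm (S.ι (a ⊗ₜ[k] h))) := rfl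
  rw [this, LinearEquiv.symm_apply_apply]
  rfl

theorem jm_hE (h : H) : jm S (S.hE h) = zmk 1 tone h := by
  rw [hE_apply, jm_ι, aE_one]

theorem E_ext {f g : E →ₗ[k] M} (h : ∀ a x, f (S.ι (a ⊗ₜ[k] x)) = g (S.ι (a ⊗ₜ[k] x))) : f = g := by
  have : f ∘ₗ S.ι.toLinearMap = g ∘ₗ S.ι.toLinearMap := TensorProduct.ext' h
  refine LinearMap.ext fun e => ?_
  have h2 := LinearMap.congr_fun this (S.ι.symm e)
  simpa using h2

theorem jm_aE (a : A) (e : E) : jm S (S.aE a * e) = lZ (S.aE a) (jm S e) := by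
  have : jm S ∘ₗ LinearMap.mulLeft k (S.aE a) = lZ (S.aE a) ∘ₗ jm S := by
    apply E_ext S
    intro b x
    simp only [LinearMap.comp_apply, LinearMap.mulLeft_apply, aE_mul, jm_ι, lZ_zmk, aE_mul_aE]
  exact LinearMap.congr_fun this e

theorem y0_ext {f g : Zc k H E H 0 →ₗ[k] M}
    (h : ∀ e x, f (lZ e (jm S (S.hE x))) = g (lZ e (jm S (S.hE x)))) : f = g := by
  apply z0_ext
  intro e w
  have := h e w
  rw [jm_hE, lZ_zmk, mul_one] at this
  exact this

/-- epsilon = partial_{-1} -/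
def epsY : Zc k H E H 0 →ₗ[k] E :=
  - (LinearMap.mul' k E ∘ₗ TensorProduct.map LinearMap.id (S.hE ∘ₗ (TensorProduct.lid k H).toLinearMap))

theorem epsY_zmk (e : E) (h : H) : epsY S (zmk e tone h) = - (e * S.hE h) := by
  have : epsY S (zmk e tone h) = -(e * S.hE ((1 : k) • h)) := rfl
  rw [this, one_smul]

theorem epsY_lZ (e : E) (y) : epsY S (lZ e y) = e * epsY S y := by
  have : epsY S ∘ₗ lZ e = LinearMap.mulLeft k e ∘ₗ epsY S := by
    apply z0_ext
    intro x w
    simp only [LinearMap.comp_apply, LinearMap.mulLeft_apply, lZ_zmk, epsY_zmk, mul_neg, mul_assoc]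
  exact LinearMap.congr_fun this y

theorem epsY_jm (e : E) : epsY S (jm S e) = - e := by
  have : epsY S ∘ₗ jm S = - LinearMap.id := by
    apply E_ext S
    intro a x
    simp only [LinearMap.comp_apply, jm_ι, epsY_zmk, aE_mul_hE, LinearMap.neg_apply, LinearMap.id_apply]
  exact LinearMap.congr_fun this e

end ZZ

section Rec
variable {k A H E W M : Type} [CommRing k] [Ring A] [Algebra k A] [Ring H] [HopfAlgebra k H]
  [Ring E] [Algebra k E] [AddCommGroup W] [Module k W] [AddCommGroup M] [Module k M]

theorem sum_cons {n : ℕ} {α : Fin (n+1) → Type} [∀ i, Fintype (α i)] {M : Type} [AddCommMonoid M]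
    (F : (∀ i, α i) → M) :
    ∑ c, F c = ∑ x : α 0, ∑ c' : (∀ i : Fin n, α i.succ), F (Fin.cons x c') := by
  rw [← (Fin.consEquiv α).sum_comp, Fintype.sum_prod_type]
  rfl

theorem tw_ext {s : ℕ} {f g : Tpow k (Qbar k H) s ⊗[k] W →ₗ[k] M}
    (h : ∀ (hs : Fin s → H) w, f (tp k (fun i => qbar k H (hs i)) ⊗ₜ[k] w) = g (tp k (fun i => qbar k H (hs i)) ⊗ₜ[k] w)) :
    f = g := by
  apply TensorProduct.ext'
  intro t w
  have : f ∘ₗ (TensorProduct.mk k _ W).flip w = g ∘ₗ (TensorProduct.mk k _ W).flip w := by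
    apply tp_ext
    intro v
    choose hs hhs using fun i => Submodule.mkQ_surjective (unitSub k H) (v i)
    have hh := h hs w
    have hv : (fun i => qbar k H (hs i)) = v := funext hhs
    rw [hv] at hh
    exact hh
  exact LinearMap.congr_fun this t

theorem xw_ext (S : CrossedProduct k A H E) {r s : ℕ} {f g : Tpow k (Qbar k H) s ⊗[k] (Tpow k (Qbar k A) r ⊗[k] E) →ₗ[k] M}
    (h : ∀ (hs : Fin s → H) (as : Fin r → A) b h', 
     f (tp k (fun i => qbar k H (hs i)) ⊗ₜ[k] (tp k (fun i => qbar k A (as i)) ⊗ₜ[k] (S.ι (b ⊗ₜ[k] h')))) =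
     g (tp k (fun i => qbar k H (hs i)) ⊗ₜ[k] (tp k (fun i => qbar k A (as i)) ⊗ₜ[k] (S.ι (b ⊗ₜ[k] h'))))) :
    f = g := by
  apply tw_ext
  intro hs w
  have : f ∘ₗ (TensorProduct.mk k _ _) (tp k (fun i => qbar k H (hs i)))
     = g ∘ₗ (TensorProduct.mk k _ _) (tp k (fun i => qbar k H (hs i))) := by
    apply TensorProduct.ext'
    intro t e
    have h1 : ∀ as : Fin r → A, (f ∘ₗ (TensorProduct.mk k _ _) (tp k (fun i => qbar k H (hs i)))) ∘ₗ TensorProduct.mk k _ _ (tp k (fun i => qbar k A (as i))) =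
       (g ∘ₗ (TensorProduct.mk k _ _) (tp k (fun i => qbar k H (hs i)))) ∘ₗ TensorProduct.mk k _ _ (tp k (fun i => qbar k A (as i))) := by
      intro as
      apply E_ext S
      intro a x
      exact h hs as a x
    have h2 : (f ∘ₗ (TensorProduct.mk k _ _) (tp k (fun i => qbar k H (hs i)))) ∘ₗ (TensorProduct.mk k _ _).flip e =
        (g ∘ₗ (TensorProduct.mk k _ _) (tp k (fun i => qbar k H (hs i)))) ∘ₗ (TensorProduct.mk k _ _).flip e := by
      apply tp_ext
      intro v
      choose as has using fun i => Submodule.mkQ_surjective (unitSub k A) (v i)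
      have hv : (fun i => qbar k A (as i)) = v := funext has
      have := LinearMap.congr_fun (h1 as) e
      rw [hv] at this
      exact this
    exact LinearMap.congr_fun h2 t
  exact LinearMap.congr_fun this w

theorem E_ind (S : CrossedProduct k A H E) {P : E → Prop} (h0 : P 0) (h1 : ∀ a h, P (S.ι (a ⊗ₜ[k] h)))
    (h2 : ∀ x y, P x → P y → P (x + y)) (e : E) : P e := by
  obtain ⟨x, rfl⟩ := S.ι.surjective e
  induction x with
  | zero => simpa using h0
  | tmul a h => exact h1 a h
  | add x y hx hy => rw [map_add]; exact h2 _ _ hx hy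

theorem lZ_zero {s : ℕ} (z : Zc k H E W s) : lZ 0 z = 0 := by
  have : (lZ 0 : Zc k H E W s →ₗ[k] Zc k H E W s) = 0 := by
    apply z_ext
    intro x t w
    rw [lZ_zmk, zero_mul]
    exact TensorProduct.zero_tmul _ _
  rw [this]; rfl

variable {S : CrossedProduct k A H E} (R : ResData k A H E S)

theorem mu_gen (s : ℕ) (a : A) (h0 h1 : H) (hs : Fin s → H) (b : A) (h' : H) :
    R.mu (s+1) (xgen (S.ι (a ⊗ₜ[k] h0)) (Fin.cons h1 hs : Fin (s+1) → H) (fun i : Fin 0 => i.elim0) (S.ι (b ⊗ₜ[k] h'))) =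
    lZ (S.ι (a ⊗ₜ[k] h0)) (jz S (R.mu s (xgen (S.hE h1) hs (fun i : Fin 0 => i.elim0) (S.ι (b ⊗ₜ[k] h'))))) := by
  choose Nv v hv using fun i => exists_SRep (k := k) 1 ((Fin.cons h0 (Fin.cons h1 hs) : Fin (s+2) → H) i)
  rw [R.mu_eq (s+1) a h0 (Fin.cons h1 hs) b h' Nv v hv, hE_apply,
   R.mu_eq s 1 h1 hs b h' (fun i => Nv i.succ) (fun i => v i.succ) (fun i => hv i.succ)]
  rw [map_sum, map_sum, sum_cons, Finset.sum_comm]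
  refine Finset.sum_congr rfl fun c _ => ?_
  have e1 : ∀ (b : A) (x : H), jz S (ygen (S.ι (b ⊗ₜ[k] x)) (fun i : Fin s => v i.succ.succ (c i.succ) 1) h') = 
    zmk (S.aE b) (tcons (qbar k H x) (tp k (fun i => qbar k H (v i.succ.succ (c i.succ) 1)))) h' := fun b x => jz_ι S b x _ _
  rw [e1, lZ_zmk, ι_mul_aE S _ _ h0 (hv 0), zmk_sum]
  refine Finset.sum_congr rfl fun x _ => ?_
  simp only [one_mul]
  rfl

theorem mu_rec1 (s : ℕ) (e : E) (h1 : H) (y) :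
    R.mu (s+1) (lZ e (jz S ((S.hE h1) ⊗ₜ[k] y))) = lZ e (jz S (R.mu s ((S.hE h1) ⊗ₜ[k] y))) := by
  have : ((R.mu (s+1) ∘ₗ lZ e) ∘ₗ jz S) ∘ₗ TensorProduct.mk k E _ (S.hE h1) =
      ((lZ e ∘ₗ jz S) ∘ₗ R.mu s) ∘ₗ TensorProduct.mk k E _ (S.hE h1) := by
    apply xw_ext S
    intro hs as b h'
    refine E_ind S (P := fun e => R.mu (s+1) (lZ e (jz S (zmk (S.hE h1) (tp k (fun i => qbar k H (hs i))) (tp k (fun i => qbar k A (as i)) ⊗ₜ[k] (S.ι (b ⊗ₜ[k] h'))))))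
      = lZ e (jz S (R.mu s (zmk (S.hE h1) (tp k (fun i => qbar k H (hs i))) (tp k (fun i => qbar k A (as i)) ⊗ₜ[k] (S.ι (b ⊗ₜ[k] h'))))))) ?_ ?_ ?_ e
    · rw [lZ_zero, lZ_zero, map_zero]
    · intro a h0
      rw [← zmk_tcons]
      exact mu_gen R s a h0 h1 hs b h'
    · intro x y hx hy
      rw [lZ_add, lZ_add, map_add, hx, hy]
  exact LinearMap.congr_fun this y

theorem mu_zero (e e' : E) : R.mu 0 (zmk e tone (tone ⊗ₜ[k] e')) = lZ e (jm S e') := by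
  refine E_ind S (P := fun e => R.mu 0 (zmk e tone (tone ⊗ₜ[k] e')) = lZ e (jm S e')) ?_ ?_ ?_ e
  · rw [lZ_zero]
    have : (zmk (0 : E) tone (tone ⊗ₜ[k] e') : Xc k A H E 0 0) = 0 := TensorProduct.zero_tmul _ _
    rw [this, map_zero]
  · intro a h0
    have : (R.mu 0 ∘ₗ TensorProduct.mk k E _ (S.ι (a ⊗ₜ[k] h0)) ∘ₗ TensorProduct.mk k _ _ tone ∘ₗ TensorProduct.mk k _ E tone) = 
       lZ (S.ι (a ⊗ₜ[k] h0)) ∘ₗ jm S := by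
      apply E_ext S
      intro b h'
      choose Nv v hv using fun i => exists_SRep (k := k) 1 ((Fin.cons h0 (fun i : Fin 0 => i.elim0) : Fin (1) → H) i)
      refine (R.mu_eq 0 a h0 (fun i : Fin 0 => i.elim0) b h' Nv v hv).trans ?_
      rw [LinearMap.comp_apply, jm_ι, lZ_zmk, ι_mul_aE S _ _ h0 (hv 0), zmk_sum, sum_cons]
      refine Finset.sum_congr rfl fun x _ => ?_
      rw [Finset.univ_unique, Finset.sum_singleton]
      rfl
    exact LinearMap.congr_fun this e'
  · intro x y hx hy
    rw [zmk_add, map_add, hx, hy, lZ_add]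

theorem x0_ext {f g : Xc k A H E 0 0 →ₗ[k] M}
    (h : ∀ e e', f (zmk e tone (tone ⊗ₜ[k] e')) = g (zmk e tone (tone ⊗ₜ[k] e'))) : f = g := by
  apply z0_ext
  intro e w
  have : f ∘ₗ TensorProduct.mk k E _ e ∘ₗ TensorProduct.mk k _ _ tone = g ∘ₗ TensorProduct.mk k E _ e ∘ₗ TensorProduct.mk k _ _ tone := by
    apply TensorProduct.ext'
    intro t e'
    have : (f ∘ₗ TensorProduct.mk k E _ e ∘ₗ TensorProduct.mk k _ _ tone) ∘ₗ (TensorProduct.mk k _ _).flip e' = 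
      (g ∘ₗ TensorProduct.mk k E _ e ∘ₗ TensorProduct.mk k _ _ tone) ∘ₗ (TensorProduct.mk k _ _).flip e' := by
      apply t0_ext
      exact h e e'
    exact LinearMap.congr_fun this t
  exact LinearMap.congr_fun this w

theorem mu_lZ (s : ℕ) (e : E) (x) : R.mu s (lZ e x) = lZ e (R.mu s x) := by
  have : R.mu s ∘ₗ lZ e = lZ e ∘ₗ R.mu s := by
    cases s with
    | zero =>
      apply x0_ext
      intro e1 e2
      rw [LinearMap.comp_apply, LinearMap.comp_apply, lZ_zmk, mu_zero, mu_zero, lZ_lZ]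
    | succ s =>
      apply zS_ext S
      intro e' x t w
      rw [LinearMap.comp_apply, LinearMap.comp_apply, lZ_lZ]
      refine (mu_rec1 R s _ _ _).trans ?_
      rw [← lZ_lZ]
      exact congrArg _ (mu_rec1 R s _ _ _).symm
  exact LinearMap.congr_fun this x

theorem mu_jz (s : ℕ) (x) : R.mu (s+1) (jz S x) = jz S (R.mu s x) := by
  have : R.mu (s+1) ∘ₗ jz S = jz S ∘ₗ R.mu s := by
    apply z_ext_ι S
    intro a h t w
    rw [LinearMap.comp_apply, LinearMap.comp_apply, ← aE_mul_hE, ← lZ_zmk, jz_aE, mu_lZ, mu_lZ, jz_aE]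
    congr 1
    have := mu_rec1 R s 1 h (t ⊗ₜ[k] w)
    rw [lZ_one, lZ_one] at this
    exact this
  exact LinearMap.congr_fun this x

end Rec

section Rec2
variable {k A H E W M : Type} [CommRing k] [Ring A] [Algebra k A] [Ring H] [HopfAlgebra k H]
  [Ring E] [Algebra k E] [AddCommGroup W] [Module k W] [AddCommGroup M] [Module k M]

theorem ygen_congr {s : ℕ} {e e' : E} {hs hs' : Fin s → H} {h h' : H} (h1 : e = e') (h2 : ∀ p, hs p = hs' p)
    (h3 : h = h') : (ygen e hs h : Yc k H E s) = ygen e' hs' h' := by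
  obtain rfl := funext h2
  rw [h1, h3]

theorem sum_fin0 {α : Fin 0 → Type} [∀ i, Fintype (α i)] {M : Type} [AddCommMonoid M]
    (F : (∀ i, α i) → M) : ∑ c, F c = F (fun i => i.elim0) := by
  rw [Fintype.sum_unique]
  congr 1

variable {S : CrossedProduct k A H E} (R : ResData k A H E S)

theorem jz_ygen {s : ℕ} (b : A) (x : H) (hs : Fin s → H) (h' : H) :
    jz S (ygen (S.ι (b ⊗ₜ[k] x)) hs h') = ygen (S.aE b) (Fin.cons x hs : Fin (s+1) → H) h' := jz_ι S b x _ _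

theorem lZ_ygen {s : ℕ} (e e' : E) (hs : Fin s → H) (h' : H) :
    lZ e (ygen e' hs h' : Yc k H E s) = ygen (e * e') hs h' := rfl

theorem ygen_sum {s : ℕ} {ι : Type} (I : Finset ι) (e : ι → E) (hs : Fin s → H) (h' : H) :
    (ygen (∑ i ∈ I, e i) hs h' : Yc k H E s) = ∑ i ∈ I, ygen (e i) hs h' := zmk_sum _ _ _ _

theorem del_gen (s : ℕ) (a : A) (h0 h1 : H) (hs : Fin (s+1) → H) (h' : H) :
    R.del (s+1) (ygen (S.ι (a ⊗ₜ[k] h0)) (Fin.cons h1 hs : Fin (s+2) → H) h') =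
    - ygen (S.ι (a ⊗ₜ[k] h0) * S.hE h1) hs h' - lZ (S.ι (a ⊗ₜ[k] h0)) (jz S (R.del s (ygen (S.hE h1) hs h'))) := by
  choose Nv v hv using fun i => exists_SRep (k := k) 1 ((Fin.cons h0 (Fin.cons h1 (Fin.snoc hs h')) : Fin (s+4) → H) i)
  have hsn : (Fin.snoc (Fin.cons h1 hs : Fin (s+2) → H) h' : Fin (s+3) → H) = Fin.cons h1 (Fin.snoc hs h' : Fin (s+2) → H) :=
    (Fin.cons_snoc_eq_snoc_cons (β := H) h1 hs h').symm
  rw [R.del_eq (s+1) a h0 (Fin.cons h1 hs) h' Nv v (by rw [hsn]; exact hv), hE_apply,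
   R.del_eq s 1 h1 hs h' (fun i => Nv i.succ) (fun i => v i.succ) (fun i => hv i.succ), hsn]
  rw [Fin.sum_univ_succ, sub_eq_add_neg]
  congr 1
  · rw [← hE_apply, ι_mul_hE S a h0 h1 (hv 0) (hv 1), ygen_sum]
    have : ((-1 : ℤ) ^ (((0 : Fin (s+1+2)) : ℕ) + 1)) = -1 := rfl
    rw [this, neg_one_zsmul]
    congr 1
    refine (sum_cons _).trans ?_
    refine Finset.sum_congr rfl fun x _ => ?_
    rw [ygen_sum]
    refine (sum_cons _).trans ?_
    refine Finset.sum_congr rfl fun y _ => ?_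
    refine (sum_fin0 _).trans ?_
    refine ygen_congr rfl ?_ ?_
    · intro p
      rw [dif_neg (by simp), dif_neg (by simp)]
      exact Fin.snoc_castSucc (α := fun _ => H) h' hs p
    · rw [dif_neg (by simp)]
      exact Fin.snoc_last (α := fun _ => H) h' hs
  · rw [map_sum, map_sum, ← Finset.sum_neg_distrib]
    refine Finset.sum_congr rfl fun i _ => ?_
    have : ((-1 : ℤ) ^ ((i.succ : ℕ) + 1)) = - (-1) ^ ((i : ℕ) + 1) := by
      rw [Fin.val_succ, pow_succ _ ((i : ℕ) + 1)]; ring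
    rw [this, neg_smul]
    congr 1
    rw [map_zsmul, map_zsmul]
    congr 1
    rw [map_sum, map_sum]
    refine (sum_cons _).trans ?_
    rw [Finset.sum_comm]
    refine Finset.sum_congr rfl fun c _ => ?_
    rw [jz_ygen, lZ_ygen, ι_mul_aE S a _ h0 (hv 0), ygen_sum]
    refine Finset.sum_congr rfl fun x _ => ?_
    refine ygen_congr ?_ ?_ ?_
    · rw [if_neg (by simp), one_mul]
      rfl
    · intro p
      refine Fin.cases ?_ (fun q => ?_) p
      · rw [Fin.cons_zero]
        by_cases hi : (i : ℕ) = 0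
        · rw [if_pos hi, dif_neg (by simp [hi]), dif_pos (by simp [hi])]
          rfl
        · rw [if_neg hi, dif_pos (by rw [Fin.val_succ]; exact Nat.succ_lt_succ (Nat.pos_of_ne_zero hi))]
          rfl
      · rw [Fin.cons_succ]
        by_cases h1 : (q : ℕ) + 1 < i
        · rw [dif_pos h1, dif_pos (by simpa using h1)]
          rfl
        · rw [dif_neg h1, dif_neg (by simpa using h1)]
          by_cases h2 : (q : ℕ) + 1 = i
          · rw [dif_pos h2, dif_pos (by simpa using h2)]
            rfl
          · rw [dif_neg h2, dif_neg (by simpa using h2)]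
            rfl
    · by_cases h2 : (i : ℕ) = s + 1
      · rw [dif_pos h2, dif_pos (by simpa using h2)]
        rfl
      · rw [dif_neg h2, dif_neg (by simpa using h2)]
        rfl

theorem del_gen0 (a : A) (h0 h1 : H) (h' : H) :
    R.del 0 (ygen (S.ι (a ⊗ₜ[k] h0)) (Fin.cons h1 (fun i : Fin 0 => i.elim0) : Fin 1 → H) h') =
    - zmk (S.ι (a ⊗ₜ[k] h0) * S.hE h1) tone h' - lZ (S.ι (a ⊗ₜ[k] h0)) (jm S (epsY S (zmk (S.hE h1) tone h'))) := by
  choose Nv v hv using fun i => exists_SRep (k := k) 1 ((Fin.cons h0 (Fin.cons h1 (Fin.cons h' (fun i : Fin 0 => i.elim0))) : Fin 3 → H) i)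
  have hsn : (Fin.snoc (Fin.cons h1 (fun i : Fin 0 => i.elim0) : Fin 1 → H) h' : Fin 2 → H) = Fin.cons h1 (Fin.cons h' (fun i : Fin 0 => i.elim0)) := by
    funext i
    fin_cases i <;> rfl
  rw [R.del_eq 0 a h0 (Fin.cons h1 (fun i : Fin 0 => i.elim0)) h' Nv v (by rw [hsn]; exact hv), hsn]
  rw [Fin.sum_univ_succ, sub_eq_add_neg]
  congr 1
  · rw [ι_mul_hE S a h0 h1 (hv 0) (hv 1), zmk_sum]
    have : ((-1 : ℤ) ^ (((0 : Fin (0+2)) : ℕ) + 1)) = -1 := rfl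
    rw [this, neg_one_zsmul]
    congr 1
    refine (sum_cons _).trans ?_
    refine Finset.sum_congr rfl fun x _ => ?_
    rw [zmk_sum]
    refine (sum_cons _).trans ?_
    refine Finset.sum_congr rfl fun y _ => ?_
    refine (sum_fin0 _).trans ?_
    rfl
  · rw [Fin.sum_univ_one, epsY_zmk, map_neg, map_neg, neg_neg, hE_mul_hE S h1 h' (hv 1) (hv 2)]
    have : ((-1 : ℤ) ^ (((0 : Fin 1).succ : ℕ) + 1)) = 1 := rfl
    rw [this, one_zsmul, map_sum, map_sum]
    refine (sum_cons _).trans ?_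
    rw [Finset.sum_comm]
    refine (sum_cons _).trans ?_
    refine Finset.sum_congr rfl fun y _ => ?_
    rw [map_sum, map_sum]
    refine (sum_cons _).trans ?_
    refine Finset.sum_congr rfl fun z _ => ?_
    refine (sum_fin0 _).trans ?_
    rw [jm_ι, lZ_zmk, ι_mul_aE S a _ h0 (hv 0), zmk_sum]
    rfl

theorem del_rec1 (s : ℕ) (e : E) (h1 : H) (y) :
    R.del (s+1) (lZ e (jz S ((S.hE h1) ⊗ₜ[k] y))) = lZ e (- ((S.hE h1) ⊗ₜ[k] y) - jz S (R.del s ((S.hE h1) ⊗ₜ[k] y))) := by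
  have : ((R.del (s+1) ∘ₗ lZ e) ∘ₗ jz S) ∘ₗ TensorProduct.mk k E _ (S.hE h1) =
      (lZ e ∘ₗ (- LinearMap.id - jz S ∘ₗ R.del s)) ∘ₗ TensorProduct.mk k E _ (S.hE h1) := by
    apply tw_ext
    intro hs w
    refine E_ind S (P := fun e => R.del (s+1) (lZ e (jz S (zmk (S.hE h1) (tp k (fun i => qbar k H (hs i))) w)))
      = lZ e (- zmk (S.hE h1) (tp k (fun i => qbar k H (hs i))) w - jz S (R.del s (zmk (S.hE h1) (tp k (fun i => qbar k H (hs i))) w)))) ?_ ?_ ?_ e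
    · rw [lZ_zero, lZ_zero, map_zero]
    · intro a h0
      rw [← zmk_tcons]
      refine (del_gen R s a h0 h1 hs w).trans ?_
      rw [map_sub, map_neg]
      rfl
    · intro x y hx hy
      rw [lZ_add, lZ_add, map_add, hx, hy]
  exact LinearMap.congr_fun this y

theorem del_rec0 (e : E) (h1 : H) (y) :
    R.del 0 (lZ e (jz S ((S.hE h1) ⊗ₜ[k] y))) = lZ e (- ((S.hE h1) ⊗ₜ[k] y) - jm S (epsY S ((S.hE h1) ⊗ₜ[k] y))) := by
  have : ((R.del 0 ∘ₗ lZ e) ∘ₗ jz S) ∘ₗ TensorProduct.mk k E _ (S.hE h1) =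
      (lZ e ∘ₗ (- LinearMap.id - jm S ∘ₗ epsY S)) ∘ₗ TensorProduct.mk k E _ (S.hE h1) := by
    apply tw_ext
    intro hs w
    refine E_ind S (P := fun e => R.del 0 (lZ e (jz S (zmk (S.hE h1) tone w)))
      = lZ e (- zmk (S.hE h1) tone w - jm S (epsY S (zmk (S.hE h1) tone w)))) ?_ ?_ ?_ e
    · rw [lZ_zero, lZ_zero, map_zero]
    · intro a h0
      rw [← zmk_tcons]
      refine (del_gen0 R a h0 h1 w).trans ?_
      rw [map_sub, map_neg]
      rfl
    · intro x y hx hy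
      rw [lZ_add, lZ_add, map_add, hx, hy]
  exact LinearMap.congr_fun this y

theorem del_lZ (s : ℕ) (e : E) (x) : R.del s (lZ e x) = lZ e (R.del s x) := by
  have : R.del s ∘ₗ lZ e = lZ e ∘ₗ R.del s := by
    cases s with
    | zero =>
      apply zS_ext S
      intro e' x t w
      rw [LinearMap.comp_apply, LinearMap.comp_apply, lZ_lZ]
      refine (del_rec0 R _ _ _).trans ?_
      rw [← lZ_lZ]
      exact congrArg _ (del_rec0 R _ _ _).symm
    | succ s =>
      apply zS_ext S
      intro e' x t w
      rw [LinearMap.comp_apply, LinearMap.comp_apply, lZ_lZ]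
      refine (del_rec1 R s _ _ _).trans ?_
      rw [← lZ_lZ]
      exact congrArg _ (del_rec1 R s _ _ _).symm
  exact LinearMap.congr_fun this x

theorem del_jz (s : ℕ) (x) : R.del (s+1) (jz S x) = - x - jz S (R.del s x) := by
  have : R.del (s+1) ∘ₗ jz S = - LinearMap.id - jz S ∘ₗ R.del s := by
    apply z_ext_ι S
    intro a h t w
    have := del_rec1 R s 1 h (t ⊗ₜ[k] w)
    rw [lZ_one, lZ_one] at this
    simp only [LinearMap.comp_apply, LinearMap.sub_apply, LinearMap.neg_apply, LinearMap.id_apply]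
    rw [← aE_mul_hE, ← lZ_zmk, jz_aE, del_lZ, del_lZ, jz_aE]
    refine (congrArg _ this).trans ?_
    rw [map_sub, map_neg]
    rfl
  exact LinearMap.congr_fun this x

theorem del_jz0 (x) : R.del 0 (jz S x) = - x - jm S (epsY S x) := by
  have : R.del 0 ∘ₗ jz S = - LinearMap.id - jm S ∘ₗ epsY S := by
    apply z_ext_ι S
    intro a h t w
    have := del_rec0 R 1 h (t ⊗ₜ[k] w)
    rw [lZ_one, lZ_one] at this
    simp only [LinearMap.comp_apply, LinearMap.sub_apply, LinearMap.neg_apply, LinearMap.id_apply]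
    rw [← aE_mul_hE, ← lZ_zmk, jz_aE, del_lZ, epsY_lZ, jm_aE]
    refine (congrArg _ this).trans ?_
    rw [map_sub, map_neg]
    rfl
  exact LinearMap.congr_fun this x

theorem eps_del (x) : epsY S (R.del 0 x) = 0 := by
  have : epsY S ∘ₗ R.del 0 = 0 := by
    apply zS_ext' S
    intro e z
    rw [LinearMap.comp_apply, del_lZ, epsY_lZ, del_jz0, map_sub, map_neg, epsY_jm]
    simp
  exact LinearMap.congr_fun this x

theorem del_del (s : ℕ) (x) : R.del s (R.del (s+1) x) = 0 := by
  have : R.del s ∘ₗ R.del (s+1) = 0 := by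
    induction s with
    | zero =>
      apply zS_ext' S
      intro e z
      rw [LinearMap.comp_apply, del_lZ, del_lZ, del_jz, map_sub, map_neg, del_jz0, eps_del]
      simp
    | succ s ih =>
      apply zS_ext' S
      intro e z
      rw [LinearMap.comp_apply, del_lZ, del_lZ, del_jz, map_sub, map_neg, del_jz]
      have := LinearMap.congr_fun (ih 0) z
      rw [LinearMap.comp_apply] at this
      rw [this]
      simp
  exact LinearMap.congr_fun this x

end Rec2

section Rho
variable {k A H E W M V : Type} [CommRing k] [Ring A] [Algebra k A] [Ring H] [HopfAlgebra k H]
  [Ring E] [Algebra k E] [AddCommGroup W] [Module k W] [AddCommGroup M] [Module k M] [AddCommGroup V] [Module k V]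

def tone1 : E →ₗ[k] (Tpow k (Qbar k A) 0 ⊗[k] E) := TensorProduct.mk k _ E tone

theorem rX_wmap {r s : ℕ} (z : E) : (rX z : Xc k A H E r s →ₗ[k] _) = wmap (TensorProduct.map LinearMap.id (LinearMap.mulRight k z)) := rfl
theorem lX_lZ {r s : ℕ} (z : E) : (lX z : Xc k A H E r s →ₗ[k] _) = lZ z := rfl

variable {S : CrossedProduct k A H E} (R : ResData k A H E S)

theorem sig0_wmap (s : ℕ) : R.sig0 s = wmap (tone1 ∘ₗ S.hE) := by
  apply z_ext_tp
  intro e hs w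
  exact R.sig0_eq s e hs w

theorem mu_zero' (e e' : E) : R.mu 0 (zmk e tone (tone1 e')) = lZ e (jm S e') := mu_zero R e e'

theorem mu_sig0 (s : ℕ) (y) : R.mu s (R.sig0 s y) = y := by
  have : R.mu s ∘ₗ R.sig0 s = LinearMap.id := by
    induction s with
    | zero =>
      apply z0_ext
      intro e h
      rw [LinearMap.comp_apply, sig0_wmap, wmap_zmk, LinearMap.comp_apply, mu_zero', jm_hE, lZ_zmk, mul_one]
      rfl
    | succ s ih =>
      apply zS_ext' S
      intro e z
      have := LinearMap.congr_fun (ih 0) z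
      rw [LinearMap.comp_apply, sig0_wmap] at this
      rw [LinearMap.comp_apply, sig0_wmap, wmap_lZ, ← jz_wmap, mu_lZ, mu_jz, this]
      rfl
  exact LinearMap.congr_fun this y

def rho (z : E) (s : ℕ) : Yc k H E s →ₗ[k] Yc k H E s := R.mu s ∘ₗ rX z ∘ₗ R.sig0 s

theorem rho_def (z : E) (s : ℕ) (y) : rho R z s y = R.mu s (rX z (R.sig0 s y)) := rfl

theorem rho_lZ (z e : E) (s : ℕ) (y) : rho R z s (lZ e y) = lZ e (rho R z s y) := by
  rw [rho_def, rho_def, sig0_wmap, wmap_lZ, rX_wmap, wmap_lZ, mu_lZ]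

theorem rho_jz (z : E) (s : ℕ) (y) : rho R z (s+1) (jz S y) = jz S (rho R z s y) := by
  rw [rho_def, rho_def, sig0_wmap, sig0_wmap, ← jz_wmap, rX_wmap, rX_wmap, ← jz_wmap, mu_jz]

theorem rho_jm (z x : E) : rho R z 0 (jm S x) = jm S (x * z) := by
  have : rho R z 0 ∘ₗ jm S = jm S ∘ₗ LinearMap.mulRight k z := by
    apply E_ext S
    intro a h
    rw [LinearMap.comp_apply, LinearMap.comp_apply, jm_ι, rho_def, sig0_wmap, wmap_zmk, rX_wmap, wmap_zmk, ← aE_mul_hE]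
    refine (mu_zero' R (S.aE a) (S.hE h * z)).trans ?_
    rw [LinearMap.mulRight_apply, mul_assoc, jm_aE]
  exact LinearMap.congr_fun this x

theorem mu_rX (z : E) (s : ℕ) (x) : R.mu s (rX z x) = rho R z s (R.mu s x) := by
  have : R.mu s ∘ₗ rX z = rho R z s ∘ₗ R.mu s := by
    induction s with
    | zero =>
      apply x0_ext
      intro e e'
      rw [LinearMap.comp_apply, LinearMap.comp_apply, mu_zero, rho_lZ, rho_jm, rX_wmap, wmap_zmk]
      exact mu_zero R e (e' * z)
    | succ s ih =>
      apply zS_ext' S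
      intro e x
      have := LinearMap.congr_fun (ih 0) x
      rw [LinearMap.comp_apply, LinearMap.comp_apply, rX_wmap] at this
      rw [LinearMap.comp_apply, LinearMap.comp_apply, rX_wmap, wmap_lZ, ← jz_wmap, mu_lZ, mu_jz, this, mu_lZ, mu_jz, rho_lZ, rho_jz]
  exact LinearMap.congr_fun this x

theorem eps_rho (z : E) (y) : epsY S (rho R z 0 y) = epsY S y * z := by
  have : epsY S ∘ₗ rho R z 0 = LinearMap.mulRight k z ∘ₗ epsY S := by
    apply y0_ext S
    intro e x
    rw [LinearMap.comp_apply, LinearMap.comp_apply, rho_lZ, rho_jm, epsY_lZ, epsY_lZ, epsY_jm, epsY_jm, LinearMap.mulRight_apply]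
    simp only [mul_neg, neg_mul, mul_assoc]
  exact LinearMap.congr_fun this y

theorem del_rho (z : E) (s : ℕ) (y) : R.del s (rho R z (s+1) y) = rho R z s (R.del s y) := by
  have : R.del s ∘ₗ rho R z (s+1) = rho R z s ∘ₗ R.del s := by
    induction s with
    | zero =>
      apply zS_ext' S
      intro e x
      rw [LinearMap.comp_apply, LinearMap.comp_apply, rho_lZ, rho_jz, del_lZ, del_lZ, rho_lZ, del_jz0, del_jz0, map_sub (rho R z 0), map_neg (rho R z 0), rho_jm, eps_rho]
    | succ s ih =>
      apply zS_ext' S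
      intro e x
      have := LinearMap.congr_fun (ih 0) x
      rw [LinearMap.comp_apply, LinearMap.comp_apply] at this
      rw [LinearMap.comp_apply, LinearMap.comp_apply, rho_lZ, rho_jz, del_lZ, del_lZ, rho_lZ, del_jz, del_jz, map_sub (rho R z (s+1)), map_neg (rho R z (s+1)), rho_jz, this]
  exact LinearMap.congr_fun this y

/-- snoc -/
def kap : ∀ s : ℕ, Tpow k V s →ₗ[k] V →ₗ[k] Tpow k V (s+1)
  | 0 => t0L (tcons.flip tone)
  | s+1 => tlift (LinearMap.mk₂ k (fun v t => tcons v ∘ₗ kap s t)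
      (by intros; simp only [map_add, LinearMap.add_comp]) (by intros; simp only [map_smul, LinearMap.smul_comp])
      (by intros; simp only [map_add, LinearMap.comp_add]) (by intros; simp only [map_smul, LinearMap.comp_smul]))

theorem kap_zero (v : V) : kap (k := k) 0 tone v = tcons v tone := by
  exact congrArg (fun f : V →ₗ[k] Tpow k V 1 => f v) (t0L_tone (k := k) (V := V) _)

theorem kap_tcons {s : ℕ} (x : V) (t : Tpow k V s) (v : V) : kap (s+1) (tcons x t) v = tcons x (kap s t v) := rfl

def eta (s : ℕ) : Yc k H E s →ₗ[k] Yc k H E (s+1) :=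
  ((-1 : ℤ) ^ s) • TensorProduct.map LinearMap.id
    ((TensorProduct.mk k (Tpow k (Qbar k H) (s+1)) H).flip 1 ∘ₗ TensorProduct.lift ((LinearMap.lcomp k _ (qbar k H)) ∘ₗ kap s))

theorem eta_zmk (s : ℕ) (e : E) (t : Tpow k (Qbar k H) s) (h : H) :
    eta s (zmk e t h) = ((-1 : ℤ) ^ s) • zmk e (kap s t (qbar k H h)) 1 := rfl

theorem eta_lZ (s : ℕ) (e : E) (y : Yc k H E s) : eta s (lZ e y) = lZ e (eta s y) := by
  have : eta s ∘ₗ lZ e = lZ e ∘ₗ eta (k := k) (H := H) s := by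
    apply z_ext
    intro e t w
    rw [LinearMap.comp_apply, LinearMap.comp_apply, lZ_zmk, eta_zmk, eta_zmk, map_zsmul, lZ_zmk]
  exact LinearMap.congr_fun this y

variable (S)

theorem eta_jz (s : ℕ) (y : Yc k H E s) : eta (s+1) (jz S y) = - jz S (eta s y) := by
  have : eta (s+1) ∘ₗ jz S = - (jz S ∘ₗ eta (k := k) (H := H) s) := by
    apply z_ext_ι S
    intro a h t w
    rw [LinearMap.neg_apply, LinearMap.comp_apply, LinearMap.comp_apply, jz_ι, eta_zmk, eta_zmk, map_zsmul, jz_ι, kap_tcons, pow_succ, mul_neg_one, neg_smul]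
  exact LinearMap.congr_fun this y

variable (k H E) in
def etam : E →ₗ[k] Yc k H E 0 := - (TensorProduct.mk k E _).flip (tone ⊗ₜ[k] 1)

theorem etam_apply (e : E) : etam k H E e = - zmk e tone 1 := rfl

theorem etam_lZ (e x : E) : etam k H E (e * x) = lZ e (etam k H E x) := by
  rw [etam_apply, etam_apply, map_neg, lZ_zmk]

theorem eps_etam (e : E) : epsY S (etam k H E e) = e := by
  rw [etam_apply, map_neg, epsY_zmk, hE_one, mul_one, neg_neg]

theorem eta_jm (x : E) : eta 0 (jm S x) = - jz S (etam k H E x) := by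
  have : eta 0 ∘ₗ jm S = - (jz S ∘ₗ etam k H E) := by
    apply E_ext S
    intro a h
    rw [LinearMap.neg_apply, LinearMap.comp_apply, LinearMap.comp_apply, jm_ι, eta_zmk, etam_apply, map_neg, jz_ι, kap_zero, pow_zero, one_zsmul, neg_neg]
  exact LinearMap.congr_fun this x

variable {S}

theorem del_eta0 (y) : R.del 0 (eta 0 y) + etam k H E (epsY S y) = y := by
  have : R.del 0 ∘ₗ eta 0 + etam k H E ∘ₗ epsY S = LinearMap.id := by
    apply y0_ext S
    intro e x
    rw [LinearMap.add_apply, LinearMap.comp_apply, LinearMap.comp_apply, eta_lZ, del_lZ, epsY_lZ, etam_lZ, eta_jm, map_neg, del_jz0, epsY_jm, eps_etam, ← map_add]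
    simp
  exact LinearMap.congr_fun this y

theorem del_eta (s : ℕ) (y) : R.del (s+1) (eta (s+1) y) + eta s (R.del s y) = y := by
  have : R.del (s+1) ∘ₗ eta (s+1) + eta s ∘ₗ R.del s = LinearMap.id := by
    induction s with
    | zero =>
      apply zS_ext' S
      intro e z
      have := del_eta0 R z
      rw [LinearMap.add_apply, LinearMap.comp_apply, LinearMap.comp_apply, eta_lZ, del_lZ, del_lZ, eta_lZ, ← map_add, eta_jz, del_jz0, map_sub, map_neg, map_neg, eta_jm, del_jz, LinearMap.id_apply]
      congr 1
      have h3 := congrArg (jz S) this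
      rw [map_add] at h3
      rw [← h3]
      abel
    | succ s ih =>
      apply zS_ext' S
      intro e z
      have := LinearMap.congr_fun (ih 0) z
      rw [LinearMap.add_apply, LinearMap.comp_apply, LinearMap.comp_apply, LinearMap.id_apply] at this
      rw [LinearMap.add_apply, LinearMap.comp_apply, LinearMap.comp_apply, eta_lZ, del_lZ, del_lZ, eta_lZ, ← map_add, eta_jz, del_jz, map_sub, map_neg, map_neg, eta_jz, del_jz, LinearMap.id_apply]
      congr 1
      have h3 := congrArg (jz S) this
      rw [map_add] at h3
      rw [← h3]
      abel
  exact LinearMap.congr_fun this y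

end Rho

section Rows
variable {k A H E W M V : Type} [CommRing k] [Ring A] [Algebra k A] [Ring H] [HopfAlgebra k H]
  [Ring E] [Algebra k E] [AddCommGroup W] [Module k W] [AddCommGroup M] [Module k M] [AddCommGroup V] [Module k V]

theorem x_ext (S : CrossedProduct k A H E) {r s : ℕ} {f g : Xc k A H E r s →ₗ[k] M}
    (h : ∀ e (hs : Fin s → H) (as : Fin r → A) b h', f (xgen e hs as (S.ι (b ⊗ₜ[k] h'))) = g (xgen e hs as (S.ι (b ⊗ₜ[k] h')))) :
    f = g := by
  apply TensorProduct.ext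
  refine LinearMap.ext fun e => ?_
  exact xw_ext S (h e)

theorem x_ext_ι (S : CrossedProduct k A H E) {r s : ℕ} {f g : Xc k A H E r s →ₗ[k] M}
    (h : ∀ a h0 (hs : Fin s → H) (as : Fin r → A) b h', f (xgen (S.ι (a ⊗ₜ[k] h0)) hs as (S.ι (b ⊗ₜ[k] h'))) = g (xgen (S.ι (a ⊗ₜ[k] h0)) hs as (S.ι (b ⊗ₜ[k] h')))) :
    f = g := by
  apply x_ext S
  intro e hs as b h'
  have : f ∘ₗ (TensorProduct.mk k E _).flip (tp k (fun i => qbar k H (hs i)) ⊗ₜ[k] (tp k (fun i => qbar k A (as i)) ⊗ₜ[k] (S.ι (b ⊗ₜ[k] h')))) =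
    g ∘ₗ (TensorProduct.mk k E _).flip (tp k (fun i => qbar k H (hs i)) ⊗ₜ[k] (tp k (fun i => qbar k A (as i)) ⊗ₜ[k] (S.ι (b ⊗ₜ[k] h')))) := by
    apply E_ext S
    intro a h0
    exact h a h0 hs as b h'
  exact LinearMap.congr_fun this e

theorem xgen_lr {r s : ℕ} (e : E) (hs : Fin s → H) (as : Fin r → A) (e' : E) :
    (xgen e hs as e' : Xc k A H E r s) = lX e (rX e' (xgen 1 hs as 1)) := by
  have : lX e (rX e' (xgen 1 hs as 1 : Xc k A H E r s)) = xgen (e * 1) hs as (1 * e') := rfl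
  rw [this, one_mul, mul_one]

theorem lX_xgen {r s : ℕ} (x e : E) (hs : Fin s → H) (as : Fin r → A) (e' : E) :
    lX x (xgen e hs as e' : Xc k A H E r s) = xgen (x * e) hs as e' := rfl

theorem rX_xgen {r s : ℕ} (x e : E) (hs : Fin s → H) (as : Fin r → A) (e' : E) :
    rX x (xgen e hs as e' : Xc k A H E r s) = xgen e hs as (e' * x) := rfl

theorem x_ext_lr (S : CrossedProduct k A H E) {r s : ℕ} {f g : Xc k A H E r s →ₗ[k] M}
    (h : ∀ e e' (hs : Fin s → H) (as : Fin r → A), f (lX e (rX e' (xgen 1 hs as 1))) = g (lX e (rX e' (xgen 1 hs as 1)))) :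
    f = g := by
  apply x_ext S
  intro e hs as b h'
  rw [xgen_lr]
  exact h _ _ _ _

variable {S : CrossedProduct k A H E} (R : ResData k A H E S)

def d0 (r s : ℕ) : Xc k A H E (r+1) s →ₗ[k] Xc k A H E r s := R.dl 0 (r+1) s
def d1 (s : ℕ) : Xc k A H E 0 (s+1) →ₗ[k] Xc k A H E 0 s := R.dl 1 0 (s+1)

theorem d0_lX (r s : ℕ) (e : E) (x) : d0 R r s (lX e x) = lX e (d0 R r s x) := LinearMap.congr_fun (R.dl_lmul 0 (r+1) s e) x
theorem d0_rX (r s : ℕ) (e : E) (x) : d0 R r s (rX e x) = rX e (d0 R r s x) := LinearMap.congr_fun (R.dl_rmul 0 (r+1) s e) x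
theorem d1_lX (s : ℕ) (e : E) (x) : d1 R s (lX e x) = lX e (d1 R s x) := LinearMap.congr_fun (R.dl_lmul 1 0 (s+1) e) x
theorem d1_rX (s : ℕ) (e : E) (x) : d1 R s (rX e x) = rX e (d1 R s x) := LinearMap.congr_fun (R.dl_rmul 1 0 (s+1) e) x

theorem d0_eq' (r s : ℕ) (a₀ : A) (h₀ : H) (hs : Fin s → H) (as : Fin (r + 1) → A)
    (b : A) (h' : H) (Nv : Fin (s + 1) → ℕ) (v : ∀ i, Fin (Nv i) → Fin 2 → H)
    (hv : ∀ i, SRep k 1 ((Fin.cons h₀ hs : Fin (s + 1) → H) i) (Nv i) (v i)) :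
    d0 R r s (xgen (S.ι (a₀ ⊗ₜ[k] h₀)) hs as (S.ι (b ⊗ₜ[k] h'))) =
      (∑ c : (∀ i, Fin (Nv i)),
        xgen (S.ι ((a₀ * iterAct k S.act (fun i => v i (c i) 0) (as 0)) ⊗ₜ[k] (v 0 (c 0) 1)))
          (fun i : Fin s => v i.succ (c i.succ) 1)
          (fun i : Fin r => as i.succ) (S.ι (b ⊗ₜ[k] h')))
      + (∑ i : Fin r, ((-1 : ℤ) ^ ((i : ℕ) + 1)) •
          xgen (S.ι (a₀ ⊗ₜ[k] h₀)) hs (mulAt as i) (S.ι (b ⊗ₜ[k] h')))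
      + ((-1 : ℤ) ^ (r + 1)) •
          xgen (S.ι (a₀ ⊗ₜ[k] h₀)) hs (fun i : Fin r => as i.castSucc)
            (S.ι ((as (Fin.last r) * b) ⊗ₜ[k] h')) := R.d0_eq r s a₀ h₀ hs as b h' Nv v hv

theorem sig_lX (r s : ℕ) (e : E) (x) : R.sig r s (lX e x) = lX e (R.sig r s x) := by
  have : R.sig r s ∘ₗ lX e = lX e ∘ₗ R.sig r s := by
    apply x_ext S
    intro e' hs as b h'
    rw [LinearMap.comp_apply, LinearMap.comp_apply, lX_xgen, R.sig_eq, R.sig_eq, map_zsmul, lX_xgen]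
  exact LinearMap.congr_fun this x

theorem row0 (s : ℕ) (x) : d0 R 0 s (R.sig 0 s x) + R.sig0 s (R.mu s x) = x := by
  have : d0 R 0 s ∘ₗ R.sig 0 s + R.sig0 s ∘ₗ R.mu s = LinearMap.id := by
    apply x_ext_ι S
    intro a h0 hs as b h'
    obtain rfl : as = fun i : Fin 0 => i.elim0 := funext fun i => i.elim0
    choose Nv v hv using fun i => exists_SRep (k := k) 1 ((Fin.cons h0 hs : Fin (s+1) → H) i)
    rw [LinearMap.add_apply, LinearMap.comp_apply, LinearMap.comp_apply, R.sig_eq, map_zsmul, hE_apply,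
      d0_eq' R 0 s a h0 hs _ _ _ Nv v hv, R.mu_eq s a h0 hs b h' Nv v hv, map_sum]
    simp only [R.sig0_eq, hE_apply]
    have h1 : (Fin.snoc (fun i : Fin 0 => i.elim0) b : Fin 1 → A) = fun _ => b := by
      funext i; fin_cases i; rfl
    rw [h1]
    have h2 : ∀ u : A, (fun i : Fin 0 => u) = fun i : Fin 0 => i.elim0 := fun u => funext fun i => i.elim0
    simp only [h2, mul_one, zero_add, pow_one, Finset.univ_eq_empty, Finset.sum_empty, add_zero, neg_smul, one_smul, LinearMap.id_apply]
    abel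
  exact LinearMap.congr_fun this x

theorem mulAt_snoc_castSucc {r : ℕ} (as : Fin (r+1) → A) (b : A) (i : Fin r) :
    mulAt (Fin.snoc as b : Fin (r+2) → A) i.castSucc = (Fin.snoc (mulAt as i) b : Fin (r+1) → A) := by
  funext j
  refine Fin.lastCases ?_ (fun q => ?_) j
  · rw [Fin.snoc_last]
    unfold mulAt
    rw [if_neg (by simp <;> omega), if_neg (by simp <;> omega), Fin.succ_last, Fin.snoc_last]
  · rw [Fin.snoc_castSucc]
    unfold mulAt
    rw [Fin.snoc_castSucc, Fin.succ_castSucc, Fin.snoc_castSucc]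
    rfl

theorem mulAt_snoc_last {r : ℕ} (as : Fin (r+1) → A) (b : A) :
    mulAt (Fin.snoc as b : Fin (r+2) → A) (Fin.last r) = (Fin.snoc (fun i => as i.castSucc) (as (Fin.last r) * b) : Fin (r+1) → A) := by
  funext j
  refine Fin.lastCases ?_ (fun q => ?_) j
  · rw [Fin.snoc_last]
    unfold mulAt
    rw [if_neg (by simp), if_pos (by simp), Fin.snoc_castSucc, Fin.succ_last, Fin.snoc_last]
  · rw [Fin.snoc_castSucc]
    unfold mulAt
    rw [if_pos (by simp), Fin.snoc_castSucc]

theorem snoc_succ' {r : ℕ} (as : Fin (r+1) → A) (b : A) : 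
   (fun i : Fin (r+1) => (Fin.snoc as b : Fin (r+2) → A) i.succ) = (Fin.snoc (fun i : Fin r => as i.succ) b : Fin (r+1) → A) := by
  funext j
  refine Fin.lastCases ?_ (fun q => ?_) j
  · rw [Fin.snoc_last, Fin.succ_last, Fin.snoc_last]
  · rw [Fin.snoc_castSucc, Fin.succ_castSucc, Fin.snoc_castSucc]

theorem row1 (r s : ℕ) (x) : d0 R (r+1) s (R.sig (r+1) s x) + R.sig r s (d0 R r s x) = x := by
  have : d0 R (r+1) s ∘ₗ R.sig (r+1) s + R.sig r s ∘ₗ d0 R r s = LinearMap.id := by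
    apply x_ext_ι S
    intro a h0 hs as b h'
    choose Nv v hv using fun i => exists_SRep (k := k) 1 ((Fin.cons h0 hs : Fin (s+1) → H) i)
    rw [LinearMap.add_apply, LinearMap.comp_apply, LinearMap.comp_apply, R.sig_eq, map_zsmul, hE_apply,
      d0_eq' R (r+1) s a h0 hs _ _ _ Nv v hv, d0_eq' R r s a h0 hs _ _ _ Nv v hv]
    simp only [map_add, map_sum, map_zsmul, R.sig_eq, Fin.sum_univ_castSucc, mulAt_snoc_castSucc, mulAt_snoc_last, snoc_succ',
      Fin.snoc_last, Fin.snoc_castSucc, ← hE_apply, mul_one, Fin.val_castSucc, Fin.val_last, LinearMap.id_apply]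
    have h3 : (Fin.snoc as b : Fin (r+2) → A) 0 = as 0 := Fin.snoc_castSucc (α := fun _ => A) b as 0
    rw [h3]
    simp only [smul_add, Finset.smul_sum, smul_smul]
    have e1 : (-1 : ℤ) ^ (r+1+1) * (-1) ^ (r+1+1) = 1 := by rw [← pow_add, ← two_mul, pow_mul]; simp
    have e2 : (-1 : ℤ) ^ (r+1) * (-1) ^ (r+1) = 1 := by rw [← pow_add, ← two_mul, pow_mul]; simp
    have e3 : (-1 : ℤ) ^ (r+1+1) * (-1) ^ (r+1) = -1 := by rw [pow_succ, mul_neg_one, neg_mul, e2]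
    have e4 : (-1 : ℤ) ^ (r+1+1) = - (-1) ^ (r+1) := by rw [pow_succ, mul_neg_one]
    rw [e1, e2, e3, e4]
    simp only [neg_mul, neg_smul, Finset.sum_neg_distrib, one_smul]
    have e5 : ∀ x : Fin r, (-1 : ℤ) ^ (x.1 + 1) * (-1) ^ (r+1) = (-1) ^ (r+1) * (-1) ^ (x.1+1) := fun x => mul_comm _ _
    simp only [e5]
    abel
  exact LinearMap.congr_fun this x

theorem xr_ext {r s : ℕ} {f g : Xc k A H E (r+1) s →ₗ[k] M} (h : ∀ z x, f (rX z (R.sig r s x)) = g (rX z (R.sig r s x))) : f = g := by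
  apply x_ext S
  intro e hs as b h'
  have h1 : xgen e hs as (S.ι (b ⊗ₜ[k] h')) = ((-1 : ℤ) ^ (r+1)) • rX (S.ι (b ⊗ₜ[k] h')) (R.sig r s (xgen e hs (fun i => as i.castSucc) (S.ι (as (Fin.last r) ⊗ₜ[k] 1)))) := by
    have e2 : (-1 : ℤ) ^ (r+1) * (-1) ^ (r+1) = 1 := by rw [← pow_add, ← two_mul, pow_mul]; simp
    have e3 : (Fin.snoc (fun i : Fin r => as i.castSucc) (as (Fin.last r)) : Fin (r+1) → A) = as := Fin.snoc_init_self as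
    rw [R.sig_eq, map_zsmul, smul_smul, e2, one_smul, rX_xgen, hE_one, one_mul, e3]
  rw [h1, map_zsmul, map_zsmul, h]

theorem mu_d0 (s : ℕ) (x) : R.mu s (d0 R 0 s x) = 0 := by
  have : R.mu s ∘ₗ d0 R 0 s = 0 := by
    apply xr_ext R
    intro z x
    rw [LinearMap.comp_apply, d0_rX, mu_rX, eq_sub_of_add_eq (row0 R s x), map_sub, mu_sig0, sub_self, map_zero]
    rfl
  exact LinearMap.congr_fun this x

theorem d0_d0 (r s : ℕ) (x) : d0 R r s (d0 R (r+1) s x) = 0 := by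
  have : d0 R r s ∘ₗ d0 R (r+1) s = 0 := by
    induction r with
    | zero =>
      apply xr_ext R
      intro z x
      rw [LinearMap.comp_apply, d0_rX, d0_rX, eq_sub_of_add_eq (row1 R 0 s x), map_sub, eq_sub_of_add_eq (row0 R s _), mu_d0, map_zero]
      simp
    | succ r ih =>
      apply xr_ext R
      intro z x
      have := LinearMap.congr_fun (ih 0) x
      rw [LinearMap.comp_apply] at this
      rw [LinearMap.comp_apply, d0_rX, d0_rX, eq_sub_of_add_eq (row1 R (r+1) s x), map_sub, eq_sub_of_add_eq (row1 R r s _), this]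
      simp
  exact LinearMap.congr_fun this x

theorem mu_d1 (s : ℕ) (x) : R.mu s (d1 R s x) = - R.del s (R.mu (s+1) x) := by
  have : R.mu s ∘ₗ d1 R s = - (R.del s ∘ₗ R.mu (s+1)) := by
    apply x_ext_lr S
    intro e e' hs as
    obtain rfl : as = fun i : Fin 0 => i.elim0 := funext fun i => i.elim0
    rw [LinearMap.neg_apply, LinearMap.comp_apply, LinearMap.comp_apply, d1_lX, d1_rX, lX_lZ, mu_lZ, mu_rX, lX_lZ, mu_lZ, mu_rX, del_lZ, del_rho]
    have : d1 R s (xgen (1 : E) hs (fun i : Fin 0 => i.elim0) (1 : E)) =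
      - R.sig0 s (R.del s (R.mu (s + 1) (xgen (1 : E) hs (fun i : Fin 0 => i.elim0) (1 : E)))) := R.dl_one_zero s hs
    rw [this, map_neg, mu_sig0, map_neg, map_neg]
  exact LinearMap.congr_fun this x

end Rows

section PertSec

structure Pert (k X Y E : Type) [CommRing k] [AddCommGroup X] [Module k X]
    [AddCommGroup Y] [Module k Y] [Ring E] [Algebra k E] where
  D0 : X →ₗ[k] X
  P : X →ₗ[k] X
  G : X →ₗ[k] X
  G0 : Y →ₗ[k] X
  M : X →ₗ[k] Y
  del : Y →ₗ[k] Y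
  eta : Y →ₗ[k] Y
  eps : Y →ₗ[k] E
  etam : E →ₗ[k] Y
  L : E → X →ₗ[k] X
  LY : E → Y →ₗ[k] Y
  Rr : E → X →ₗ[k] X
  F : ℕ → Submodule k X
  T : ℕ → Submodule k X
  gen : ℕ → Set X
  row : ∀ x, D0 (G x) + G (D0 x) + G0 (M x) = x
  MD0 : ∀ x, M (D0 x) = 0
  MG : ∀ x, M (G x) = 0
  MG0 : ∀ y, M (G0 y) = y
  D0G0 : ∀ y, D0 (G0 y) = 0
  D0D0 : ∀ x, D0 (D0 x) = 0
  MP : ∀ x, M (P x) = - del (M x)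
  deldel : ∀ y, del (del y) = 0
  epsdel : ∀ y, eps (del y) = 0
  deleta : ∀ y, del (eta y) + eta (del y) + etam (eps y) = y
  epsetam : ∀ e, eps (etam e) = e
  F0 : F 0 = ⊥
  PF : ∀ m x, x ∈ F (m+1) → P x ∈ F m
  D0F : ∀ m x, x ∈ F m → D0 x ∈ F m
  Tall : ∀ x, ∃ n, x ∈ T n
  PF0 : ∀ m x, x ∈ F m → P x ∈ F m
  GF : ∀ m x, x ∈ F m → G x ∈ F m
  TF : ∀ n x, x ∈ T n → x ∈ F n
  T0 : T 0 = ⊥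
  D0T : ∀ n x, x ∈ T (n+1) → D0 x ∈ T n
  PT : ∀ n x, x ∈ T (n+1) → P x ∈ T n
  G0T : ∀ n x, x ∈ T n → G0 (eta (M x)) ∈ T (n+1)
  genT : ∀ n g, g ∈ gen n → g ∈ T n
  Tgen : ∀ n (f : X →ₗ[k] X), (∀ e e' g, g ∈ gen n → f (L e (Rr e' g)) = 0) →
    ∀ x ∈ T n, f x = 0
  hgen : ∀ n g, g ∈ gen n → P g = - G0 (del (M g)) - G (P (D0 g + P g))
  D0L : ∀ e x, D0 (L e x) = L e (D0 x)
  PL : ∀ e x, P (L e x) = L e (P x)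
  G_L : ∀ e x, G (L e x) = L e (G x)
  G0L : ∀ e y, G0 (LY e y) = L e (G0 y)
  ML : ∀ e x, M (L e x) = LY e (M x)
  etaL : ∀ e y, eta (LY e y) = LY e (eta y)
  D0R : ∀ e x, D0 (Rr e x) = Rr e (D0 x)
  PR : ∀ e x, P (Rr e x) = Rr e (P x)

namespace Pert
variable {k X Y E : Type} [CommRing k] [AddCommGroup X] [Module k X]
    [AddCommGroup Y] [Module k Y] [Ring E] [Algebra k E] (Q : Pert k X Y E)

def D : X →ₗ[k] X := Q.D0 + Q.P

theorem D_apply (x : X) : Q.D x = Q.D0 x + Q.P x := rfl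
theorem D_L (e : E) (x : X) : Q.D (Q.L e x) = Q.L e (Q.D x) := by
  simp only [D_apply, Q.D0L, Q.PL, map_add]
theorem D_R (e : E) (x : X) : Q.D (Q.Rr e x) = Q.Rr e (Q.D x) := by
  simp only [D_apply, Q.D0R, Q.PR, map_add]
theorem D_T (n : ℕ) (x : X) (hx : x ∈ Q.T (n+1)) : Q.D x ∈ Q.T n :=
  (Q.T n).add_mem (Q.D0T n x hx) (Q.PT n x hx)

theorem fix_zero (n : ℕ) (z : X) (hz : z ∈ Q.F n) (h : z = - Q.G (Q.P z)) : z = 0 := by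
  induction n with
  | zero => rw [Q.F0] at hz; exact (Submodule.mem_bot k).1 hz
  | succ m ih =>
    apply ih
    rw [h]
    exact (Q.F m).neg_mem (Q.GF _ _ (Q.PF _ _ hz))

theorem D_D (n : ℕ) : ∀ x ∈ Q.T n, Q.D (Q.D x) = 0 := by
  induction n with
  | zero => intro x hx; rw [Q.T0] at hx; rw [(Submodule.mem_bot k).1 hx]; simp
  | succ n ih =>
    refine Q.Tgen (n+1) (Q.D ∘ₗ Q.D) ?_
    intro e e' g hg
    simp only [LinearMap.comp_apply]
    rw [D_L, D_R, D_L, D_R]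
    suffices h : Q.D (Q.D g) = 0 by rw [h]; simp
    have hgT := Q.genT _ _ hg
    have hDg := Q.D_T n g hgT
    have hDz : Q.D (Q.D (Q.D g)) = 0 := ih _ hDg
    have hP := Q.hgen _ _ hg
    rw [← D_apply] at hP
    have h1 : Q.D0 (Q.P g) = - Q.D0 (Q.G (Q.P (Q.D g))) := by
      conv_lhs => rw [hP]
      rw [map_sub, map_neg, Q.D0G0, neg_zero, zero_sub]
    have h2 : Q.D (Q.D g) = Q.D0 (Q.P g) + Q.P (Q.D g) := by
      rw [D_apply Q (Q.D g)]
      congr 1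
      rw [D_apply, map_add, Q.D0D0, zero_add]
    have h3 : Q.M (Q.P (Q.D g)) = 0 := by
      rw [Q.MP, D_apply, map_add Q.M, Q.MD0, Q.MP, zero_add, map_neg, Q.deldel]; simp
    have h4 := Q.row (Q.P (Q.D g))
    rw [h3, map_zero, add_zero] at h4
    have h5 : Q.D0 (Q.D (Q.D g)) = Q.D0 (Q.P (Q.D g)) := by
      rw [h2, map_add, Q.D0D0, zero_add]
    have h6 : Q.D (Q.D g) = Q.G (Q.D0 (Q.D (Q.D g))) := by
      rw [h5, h2, h1]
      nth_rewrite 2 [← h4]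
      abel
    rw [D_apply Q (Q.D (Q.D g))] at hDz
    rw [eq_neg_of_add_eq_zero_left hDz, map_neg] at h6
    have hzT : Q.D (Q.D g) ∈ Q.F n := by
      have := Q.TF _ _ hDg
      exact Submodule.add_mem _ (Q.D0F _ _ this) (Q.PF0 _ _ this)
    exact Q.fix_zero _ _ hzT h6

theorem DD (x : X) : Q.D (Q.D x) = 0 := by
  obtain ⟨n, hn⟩ := Q.Tall x
  exact Q.D_D n x hn

theorem MD (x : X) : Q.M (Q.D x) = - Q.del (Q.M x) := by
  rw [D_apply, map_add, Q.MD0, Q.MP, zero_add]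

theorem exists_tau0 (m : ℕ) : ∃ t : X →ₗ[k] X, (∀ e x, t (Q.L e x) = Q.L e (t x)) ∧
    ∀ x ∈ Q.F m, Q.D x = 0 → Q.M x = 0 → Q.D (t x) = x := by
  induction m with
  | zero =>
    refine ⟨0, fun e x => by simp, fun x hx _ _ => ?_⟩
    rw [Q.F0] at hx; rw [(Submodule.mem_bot k).1 hx]; simp
  | succ m ih =>
    obtain ⟨t, hL, ht⟩ := ih
    refine ⟨Q.G + t ∘ₗ (LinearMap.id - Q.D ∘ₗ Q.G), fun e x => ?_, fun x hx hD hM => ?_⟩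
    · simp only [LinearMap.add_apply, LinearMap.comp_apply, LinearMap.sub_apply, LinearMap.id_apply]
      rw [Q.G_L, D_L, ← map_sub, hL, ← map_add]
    · simp only [LinearMap.add_apply, LinearMap.comp_apply, LinearMap.sub_apply, LinearMap.id_apply]
      rw [map_add, ht]
      · abel
      · have h1 := Q.row x
        rw [hM, map_zero, add_zero] at h1
        rw [D_apply] at hD
        rw [eq_neg_of_add_eq_zero_left hD, map_neg] at h1
        have h2 : x - Q.D (Q.G x) = - Q.G (Q.P x) - Q.P (Q.G x) := by
          rw [D_apply]
          nth_rewrite 1 [← h1]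
          abel
        rw [h2]
        exact Submodule.sub_mem _ (Submodule.neg_mem _ (Q.GF _ _ (Q.PF _ _ hx))) (Q.PF _ _ (Q.GF _ _ hx))
      · rw [map_sub, hD, DD, sub_zero]
      · rw [map_sub, hM, MD, Q.MG, map_zero, neg_zero, sub_zero]

theorem exists_tau (n : ℕ) : ∃ t : X →ₗ[k] X, (∀ e x, t (Q.L e x) = Q.L e (t x)) ∧
    ∀ x ∈ Q.T n, Q.D x = 0 → Q.eps (Q.M x) = 0 → Q.D (t x) = x := by
  obtain ⟨t, hL, ht⟩ := Q.exists_tau0 n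
  refine ⟨- (Q.G0 ∘ₗ Q.eta ∘ₗ Q.M) + t ∘ₗ (LinearMap.id + Q.D ∘ₗ Q.G0 ∘ₗ Q.eta ∘ₗ Q.M), fun e x => ?_, fun x hx hD hM => ?_⟩
  · simp only [LinearMap.add_apply, LinearMap.comp_apply, LinearMap.neg_apply, LinearMap.id_apply]
    rw [Q.ML, Q.etaL, Q.G0L, D_L, ← map_add, hL, ← map_neg, ← map_add]
  · simp only [LinearMap.add_apply, LinearMap.comp_apply, LinearMap.neg_apply, LinearMap.id_apply]
    have h0 : Q.del (Q.M x) = 0 := by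
      have := Q.MD x
      rw [hD, map_zero] at this
      exact neg_eq_zero.1 this.symm
    have h1 := Q.deleta (Q.M x)
    rw [h0, hM, map_zero, map_zero, add_zero, add_zero] at h1
    rw [map_add, ht]
    · rw [map_neg]; abel
    · exact Submodule.add_mem _ (Q.TF _ _ hx) (Q.TF _ _ (Q.D_T _ _ (Q.G0T _ _ hx)))
    · rw [map_add, hD, DD, add_zero]
    · rw [map_add, MD, Q.MG0, h1]; abel

theorem epsMD (x : X) : Q.eps (Q.M (Q.D x)) = 0 := by
  rw [MD, map_neg, Q.epsdel, neg_zero]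

theorem D_G0_etam (e : E) : Q.eps (Q.M (Q.G0 (Q.etam e))) = e := by
  rw [Q.MG0, Q.epsetam]

end Pert
end PertSec

section Tot
variable {k A H E N : Type} [CommRing k] [Ring A] [Algebra k A] [Ring H] [HopfAlgebra k H]
  [Ring E] [Algebra k E] [AddCommGroup N] [Module k N]

variable (k A H E) in
def XX : Type := ⨁ (p : ℕ × ℕ), Xc k A H E p.1 p.2
noncomputable instance XX.acg : AddCommGroup (XX k A H E) :=
  inferInstanceAs (AddCommGroup (⨁ (p : ℕ × ℕ), Xc k A H E p.1 p.2))
noncomputable instance XX.modu : Module k (XX k A H E) :=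
  inferInstanceAs (Module k (⨁ (p : ℕ × ℕ), Xc k A H E p.1 p.2))
variable (k H E) in
def YY : Type := ⨁ (s : ℕ), Yc k H E s
noncomputable instance YY.acg : AddCommGroup (YY k H E) :=
  inferInstanceAs (AddCommGroup (⨁ (s : ℕ), Yc k H E s))
noncomputable instance YY.modu : Module k (YY k H E) :=
  inferInstanceAs (Module k (⨁ (s : ℕ), Yc k H E s))

def ix (r s : ℕ) : Xc k A H E r s →ₗ[k] XX k A H E :=
  DirectSum.lof k (ℕ × ℕ) (fun p => Xc k A H E p.1 p.2) (r, s)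
def iy (s : ℕ) : Yc k H E s →ₗ[k] YY k H E :=
  DirectSum.lof k ℕ (fun s => Yc k H E s) s
def xl (f : ∀ r s, Xc k A H E r s →ₗ[k] N) : XX k A H E →ₗ[k] N :=
  DirectSum.toModule k (ℕ × ℕ) N (fun p => f p.1 p.2)
def yl (f : ∀ s, Yc k H E s →ₗ[k] N) : YY k H E →ₗ[k] N :=
  DirectSum.toModule k ℕ N f
theorem xl_ix (f : ∀ r s, Xc k A H E r s →ₗ[k] N) (r s x) : xl f (ix r s x) = f r s x :=
  DirectSum.toModule_lof k (φ := fun p : ℕ × ℕ => f p.1 p.2) (r, s) x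
theorem yl_iy (f : ∀ s, Yc k H E s →ₗ[k] N) (s x) : yl f (iy s x) = f s x :=
  DirectSum.toModule_lof k (φ := f) s x
theorem XX_ext {f g : XX k A H E →ₗ[k] N} (h : ∀ r s x, f (ix r s x) = g (ix r s x)) : f = g := by
  apply DirectSum.linearMap_ext
  rintro ⟨r, s⟩
  exact LinearMap.ext fun x => h r s x
theorem YY_ext {f g : YY k H E →ₗ[k] N} (h : ∀ s x, f (iy s x) = g (iy s x)) : f = g := by
  apply DirectSum.linearMap_ext
  intro s
  exact LinearMap.ext fun x => h s x
theorem ix_cast {r r' s s' : ℕ} (hr : r = r') (hs : s = s') (x : Xc k A H E r s) :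
    ix r' s' (xcast hr hs x) = ix r s x := by
  subst hr; subst hs; rfl

def FF (k A H E : Type) [CommRing k] [Ring A] [Algebra k A] [Ring H] [HopfAlgebra k H]
  [Ring E] [Algebra k E] (p : ℕ → ℕ → Prop) : Submodule k (XX k A H E) :=
  ⨆ (r : ℕ) (s : ℕ) (_ : p r s), LinearMap.range (ix (k := k) (A := A) (H := H) (E := E) r s)

theorem ix_mem {p : ℕ → ℕ → Prop} {r s : ℕ} (h : p r s) (x : Xc k A H E r s) : ix r s x ∈ FF k A H E p := by
  have : LinearMap.range (ix (k := k) (A := A) (H := H) (E := E) r s) ≤ FF k A H E p :=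
    le_iSup_of_le r (le_iSup_of_le s (le_iSup_of_le h le_rfl))
  exact this ⟨x, rfl⟩

theorem FF_le {p : ℕ → ℕ → Prop} {U : Submodule k (XX k A H E)}
    (h : ∀ r s x, p r s → ix r s x ∈ U) : FF k A H E p ≤ U := by
  refine iSup_le fun r => iSup_le fun s => iSup_le fun hp => ?_
  rintro _ ⟨x, rfl⟩
  exact h r s x hp

theorem FF_map {p q : ℕ → ℕ → Prop} (f : XX k A H E →ₗ[k] XX k A H E)
    (h : ∀ r s x, p r s → f (ix r s x) ∈ FF k A H E q) (x) (hx : x ∈ FF k A H E p) : f x ∈ FF k A H E q :=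
  FF_le (U := (FF k A H E q).comap f) h hx

theorem FF_bot {p : ℕ → ℕ → Prop} (h : ∀ r s, ¬ p r s) : FF k A H E p = ⊥ :=
  le_bot_iff.1 (FF_le fun r s _ hp => (h r s hp).elim)

theorem exists_FF (x : XX k A H E) : ∃ n : ℕ, x ∈ FF k A H E (fun r s => r + s < n) := by
  refine DirectSum.induction_on (motive := fun x : XX k A H E => ∃ n : ℕ, x ∈ FF k A H E (fun r s => r + s < n)) x ⟨0, Submodule.zero_mem _⟩ ?_ ?_
  · rintro ⟨r, s⟩ x
    exact ⟨r + s + 1, ix_mem (by omega) x⟩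
  · rintro x y ⟨n, hn⟩ ⟨m, hm⟩
    refine ⟨n + m, Submodule.add_mem _ ?_ ?_⟩
    · exact FF_map LinearMap.id (fun r s x h => ix_mem (by omega) x) _ hn
    · exact FF_map LinearMap.id (fun r s x h => ix_mem (by omega) x) _ hm

variable {S : CrossedProduct k A H E} (R : ResData k A H E S)

def PL (l : ℕ) : XX k A H E →ₗ[k] XX k A H E :=
  xl fun r s => ix (r + l - 1) (s - l) ∘ₗ R.dl l r s
def tD0 : XX k A H E →ₗ[k] XX k A H E :=
  xl fun r s => match r with
    | 0 => 0
    | r + 1 => ix r s ∘ₗ d0 R r s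
def tP : XX k A H E →ₗ[k] XX k A H E :=
  xl fun r s => ∑ l ∈ Finset.range s, PL R (l + 1) ∘ₗ ix r s
def tG : XX k A H E →ₗ[k] XX k A H E := xl fun r s => ix (r + 1) s ∘ₗ R.sig r s
def tG0 : YY k H E →ₗ[k] XX k A H E := yl fun s => ix 0 s ∘ₗ R.sig0 s
def tM : XX k A H E →ₗ[k] YY k H E :=
  xl fun r s => match r with
    | 0 => iy s ∘ₗ R.mu s
    | _ + 1 => 0
def tdel : YY k H E →ₗ[k] YY k H E :=
  yl fun s => match s with
    | 0 => 0
    | s + 1 => iy s ∘ₗ R.del s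
def teta : YY k H E →ₗ[k] YY k H E := yl fun s => iy (s + 1) ∘ₗ eta s
def teps (S : CrossedProduct k A H E) : YY k H E →ₗ[k] E :=
  yl fun s => match s with
    | 0 => epsY S
    | _ + 1 => 0
def tetam : E →ₗ[k] YY k H E := iy 0 ∘ₗ etam k H E
def tL (e : E) : XX k A H E →ₗ[k] XX k A H E := xl fun r s => ix r s ∘ₗ lX e
def tR (e : E) : XX k A H E →ₗ[k] XX k A H E := xl fun r s => ix r s ∘ₗ rX e
def tLY (e : E) : YY k H E →ₗ[k] YY k H E := yl fun s => iy s ∘ₗ lZ e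

theorem PL_ix (l r s x) : PL R l (ix r s x) = ix (r + l - 1) (s - l) (R.dl l r s x) := xl_ix _ r s x
theorem tD0_zero (s x) : tD0 R (ix 0 s x) = 0 := xl_ix _ 0 s x
theorem tD0_succ (r s x) : tD0 R (ix (r+1) s x) = ix r s (d0 R r s x) := xl_ix _ (r+1) s x
theorem tD0_succ' (r s x) : tD0 R (ix (r+1) s x) = PL R 0 (ix (r+1) s x) := by
  rw [tD0_succ, PL_ix]; rfl
theorem tP_ix (r s x) : tP R (ix r s x) = ∑ l ∈ Finset.range s, PL R (l+1) (ix r s x) := by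
  refine (xl_ix _ r s x).trans ?_
  rw [LinearMap.sum_apply]; rfl
theorem tG_ix (r s x) : tG R (ix r s x) = ix (r+1) s (R.sig r s x) := xl_ix _ r s x
theorem tG0_iy (s y) : tG0 R (iy s y) = ix 0 s (R.sig0 s y) := yl_iy _ s y
theorem tM_zero (s x) : tM R (ix 0 s x) = iy s (R.mu s x) := xl_ix _ 0 s x
theorem tM_succ (r s x) : tM R (ix (r+1) s x) = 0 := xl_ix _ (r+1) s x
theorem tM_pos (r s x) (h : r ≠ 0) : tM R (ix r s x) = 0 := by
  obtain ⟨r, rfl⟩ := Nat.exists_eq_succ_of_ne_zero h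
  exact tM_succ R r s x
theorem tdel_zero (y) : tdel R (iy 0 y) = 0 := yl_iy _ 0 y
theorem tdel_succ (s y) : tdel R (iy (s+1) y) = iy s (R.del s y) := yl_iy _ (s+1) y
theorem teta_iy (s : ℕ) (y : Yc k H E s) : teta (iy s y) = iy (s+1) (eta s y) := yl_iy _ s y
theorem teps_zero (y) : teps S (iy 0 y) = epsY S y := yl_iy _ 0 y
theorem teps_succ (s y) : teps S (iy (s+1) y) = 0 := yl_iy _ (s+1) y
theorem tetam_apply (e : E) : tetam (k := k) (H := H) e = iy 0 (etam k H E e) := rfl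
theorem tL_ix (e : E) (r s) (x : Xc k A H E r s) : tL e (ix r s x) = ix r s (lX e x) := xl_ix _ r s x
theorem tR_ix (e : E) (r s) (x : Xc k A H E r s) : tR e (ix r s x) = ix r s (rX e x) := xl_ix _ r s x
theorem tLY_iy (e : E) (s) (x : Yc k H E s) : tLY e (iy s x) = iy s (lZ e x) := yl_iy _ s x

theorem XX_ind {f g : XX k A H E →ₗ[k] N} (h : ∀ r s x, f (ix r s x) = g (ix r s x)) (x) : f x = g x :=
  LinearMap.congr_fun (XX_ext h) x
theorem YY_ind {f g : YY k H E →ₗ[k] N} (h : ∀ s x, f (iy s x) = g (iy s x)) (x) : f x = g x :=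
  LinearMap.congr_fun (YY_ext h) x

theorem t_row (x) : tD0 R (tG R x) + tG R (tD0 R x) + tG0 R (tM R x) = x := by
  refine XX_ind (f := tD0 R ∘ₗ tG R + tG R ∘ₗ tD0 R + tG0 R ∘ₗ tM R) (g := LinearMap.id) ?_ x
  intro r s x
  simp only [LinearMap.add_apply, LinearMap.comp_apply, LinearMap.id_apply]
  cases r with
  | zero => rw [tG_ix, tD0_succ, tD0_zero, map_zero, add_zero, tM_zero, tG0_iy, ← map_add, row0]
  | succ r => rw [tG_ix, tD0_succ, tD0_succ, tG_ix, tM_succ, map_zero, add_zero, ← map_add, row1]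

theorem t_MD0 (x) : tM R (tD0 R x) = 0 := by
  refine XX_ind (f := tM R ∘ₗ tD0 R) (g := 0) ?_ x
  intro r s x
  simp only [LinearMap.comp_apply, LinearMap.zero_apply]
  rcases r with _ | _ | r
  · rw [tD0_zero, map_zero]
  · rw [tD0_succ, tM_zero, mu_d0, map_zero]
  · rw [tD0_succ, tM_succ]

theorem t_MG (x) : tM R (tG R x) = 0 := by
  refine XX_ind (f := tM R ∘ₗ tG R) (g := 0) ?_ x
  intro r s x
  simp only [LinearMap.comp_apply, LinearMap.zero_apply]
  rw [tG_ix, tM_succ]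

theorem t_MG0 (y) : tM R (tG0 R y) = y := by
  refine YY_ind (f := tM R ∘ₗ tG0 R) (g := LinearMap.id) ?_ y
  intro s x
  simp only [LinearMap.comp_apply, LinearMap.id_apply]
  rw [tG0_iy, tM_zero, mu_sig0]

theorem t_D0G0 (y) : tD0 R (tG0 R y) = 0 := by
  refine YY_ind (f := tD0 R ∘ₗ tG0 R) (g := 0) ?_ y
  intro s x
  simp only [LinearMap.comp_apply, LinearMap.zero_apply]
  rw [tG0_iy, tD0_zero]

theorem t_D0D0 (x) : tD0 R (tD0 R x) = 0 := by
  refine XX_ind (f := tD0 R ∘ₗ tD0 R) (g := 0) ?_ x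
  intro r s x
  simp only [LinearMap.comp_apply, LinearMap.zero_apply]
  rcases r with _ | _ | r
  · rw [tD0_zero, map_zero]
  · rw [tD0_succ, tD0_zero]
  · rw [tD0_succ, tD0_succ, d0_d0, map_zero]

theorem t_MP (x) : tM R (tP R x) = - tdel R (tM R x) := by
  refine XX_ind (f := tM R ∘ₗ tP R) (g := - (tdel R ∘ₗ tM R)) ?_ x
  intro r s x
  simp only [LinearMap.comp_apply, LinearMap.neg_apply]
  rw [tP_ix, map_sum]
  rcases r with _ | r
  · rcases s with _ | s
    · rw [tM_zero, tdel_zero]; simp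
    · rw [Finset.sum_range_succ', Finset.sum_eq_zero, zero_add]
      · rw [PL_ix]
        refine (tM_zero R s (d1 R s x)).trans ?_
        rw [mu_d1, tM_zero, tdel_succ, map_neg]
      · intro l _
        rw [PL_ix, tM_pos]
        omega
  · rw [tM_succ, map_zero, neg_zero]
    refine Finset.sum_eq_zero fun l _ => ?_
    rw [PL_ix, tM_pos]
    omega

theorem t_deldel (y) : tdel R (tdel R y) = 0 := by
  refine YY_ind (f := tdel R ∘ₗ tdel R) (g := 0) ?_ y
  intro s x
  simp only [LinearMap.comp_apply, LinearMap.zero_apply]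
  rcases s with _ | _ | s
  · rw [tdel_zero, map_zero]
  · rw [tdel_succ, tdel_zero]
  · rw [tdel_succ, tdel_succ, del_del, map_zero]

theorem t_epsdel (y) : teps S (tdel R y) = 0 := by
  refine YY_ind (f := teps S ∘ₗ tdel R) (g := 0) ?_ y
  intro s x
  simp only [LinearMap.comp_apply, LinearMap.zero_apply]
  rcases s with _ | _ | s
  · rw [tdel_zero, map_zero]
  · rw [tdel_succ, teps_zero, eps_del]
  · rw [tdel_succ, teps_succ]

theorem t_deleta (y) : tdel R (teta y) + teta (tdel R y) + tetam (teps S y) = y := by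
  refine YY_ind (f := tdel R ∘ₗ teta + teta ∘ₗ tdel R + tetam ∘ₗ teps S) (g := LinearMap.id) ?_ y
  intro s x
  simp only [LinearMap.add_apply, LinearMap.comp_apply, LinearMap.id_apply]
  rcases s with _ | s
  · rw [teta_iy, tdel_succ, tdel_zero, map_zero, add_zero, teps_zero, tetam_apply, ← map_add, del_eta0]
  · rw [teta_iy, tdel_succ, tdel_succ, teta_iy, teps_succ, map_zero, add_zero, ← map_add, del_eta]

end Tot

section Tot2
variable {k A H E N : Type} [CommRing k] [Ring A] [Algebra k A] [Ring H] [HopfAlgebra k H]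
  [Ring E] [Algebra k E] [AddCommGroup N] [Module k N]
variable {S : CrossedProduct k A H E} (R : ResData k A H E S)

theorem reidx (f : ℕ → ℕ → N) (s : ℕ) :
    ∑ j ∈ Finset.range s, ∑ i ∈ Finset.range (s - (j + 1)), f (i + 1) (j + 1) =
    ∑ l ∈ Finset.range s, ∑ j ∈ Finset.range l, f (l - j) (j + 1) := by
  rw [Finset.sum_sigma', Finset.sum_sigma']
  refine Finset.sum_bij' (fun p _ => ⟨p.2 + p.1 + 1, p.1⟩) (fun p _ => ⟨p.2, p.1 - p.2 - 1⟩) ?_ ?_ ?_ ?_ ?_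
  · rintro ⟨j, i⟩ h
    simp only [Finset.mem_sigma, Finset.mem_range] at h ⊢
    omega
  · rintro ⟨j, i⟩ h
    simp only [Finset.mem_sigma, Finset.mem_range] at h ⊢
    omega
  · rintro ⟨j, i⟩ h
    simp only [Finset.mem_sigma, Finset.mem_range] at h ⊢
    ext <;> simp; omega
  · rintro ⟨j, i⟩ h
    simp only [Finset.mem_sigma, Finset.mem_range] at h ⊢
    ext <;> simp; omega
  · rintro ⟨j, i⟩ h
    simp only [Finset.mem_sigma, Finset.mem_range] at h ⊢
    congr 1
    omega

theorem tPP (r s x) : tP R (tP R (ix r s x)) =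
    ∑ l ∈ Finset.range s, ∑ j ∈ Finset.range l, PL R (l - j) (PL R (j + 1) (ix r s x)) := by
  rw [← reidx (fun a b => PL R a (PL R b (ix r s x))), tP_ix, map_sum]
  refine Finset.sum_congr rfl fun j _ => ?_
  rw [PL_ix, tP_ix]

theorem PL_gen_zero_one (s : ℕ) (hs : Fin (s+1) → H) :
    PL R 1 (ix 0 (s+1) (xgen 1 hs (fun i : Fin 0 => i.elim0) 1)) =
      - tG0 R (tdel R (tM R (ix 0 (s+1) (xgen 1 hs (fun i : Fin 0 => i.elim0) 1)))) := by
  rw [PL_ix, R.dl_one_zero, tM_zero, tdel_succ, tG0_iy]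
  exact map_neg (ix 0 s) _

theorem PL_gen_zero (l s : ℕ) (hl : l + 2 ≤ s) (hs : Fin s → H) :
    PL R (l+2) (ix 0 s (xgen 1 hs (fun i : Fin 0 => i.elim0) 1)) =
      - ∑ j ∈ Finset.range (l+1), tG R (PL R (l + 1 - j) (PL R (j + 1) (ix 0 s (xgen 1 hs (fun i : Fin 0 => i.elim0) 1)))) := by
  rw [PL_ix, R.dl_zero (l+2) s (by omega) hl hs, map_neg (ix (k := k) _ _), map_sum]
  rw [Finset.sum_range]
  congr 1
  refine Finset.sum_congr rfl fun j _ => ?_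
  rw [ix_cast, ← tG_ix, ix_cast, ← PL_ix, ix_cast, ← PL_ix]
  congr 3
  omega

theorem PL_gen_succ (l r s : ℕ) (hl : l + 1 ≤ s) (hs : Fin s → H) (as : Fin (r+1) → A) :
    PL R (l+1) (ix (r+1) s (xgen 1 hs as 1)) =
      - ∑ j ∈ Finset.range (l+1), tG R (PL R (l + 1 - j) (PL R j (ix (r+1) s (xgen 1 hs as 1)))) := by
  rw [PL_ix, R.dl_succ (l+1) r s (by omega) hl hs, map_neg (ix (k := k) _ _), map_sum]
  rw [Finset.sum_range]
  congr 1
  refine Finset.sum_congr rfl fun j _ => ?_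
  rw [ix_cast, ← tG_ix, ix_cast, ← PL_ix, ix_cast, ← PL_ix]

theorem t_hgen (r s : ℕ) (hs : Fin s → H) (as : Fin r → A) :
    tP R (ix r s (xgen 1 hs as 1)) = - tG0 R (tdel R (tM R (ix r s (xgen 1 hs as 1))))
      - tG R (tP R (tD0 R (ix r s (xgen 1 hs as 1)) + tP R (ix r s (xgen 1 hs as 1)))) := by
  rcases r with _ | r
  · have has : as = fun i : Fin 0 => i.elim0 := funext fun i => i.elim0
    subst has
    rw [tD0_zero, zero_add, tPP]
    rcases s with _ | s
    · rw [tM_zero, tdel_zero, tP_ix]; simp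
    · rw [tP_ix, Finset.sum_range_succ', Finset.sum_range_succ', zero_add, PL_gen_zero_one]
      rw [Finset.range_zero, Finset.sum_empty, add_zero, map_sum, add_comm, sub_eq_add_neg, ← Finset.sum_neg_distrib]
      congr 1
      refine Finset.sum_congr rfl fun l hl => ?_
      rw [PL_gen_zero R l (s+1) (by have := Finset.mem_range.1 hl; omega), map_sum]
  · rw [tM_succ, map_zero, map_zero, neg_zero, zero_sub, map_add, tPP]
    rw [tD0_succ', PL_ix R 0, tP_ix, tP_ix, ← PL_ix R 0]
    rw [Nat.sub_zero, ← Finset.sum_add_distrib, map_sum, ← Finset.sum_neg_distrib]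
    refine Finset.sum_congr rfl fun l hl => ?_
    rw [PL_gen_succ R l r s (by have := Finset.mem_range.1 hl; omega), Finset.sum_range_succ', map_add, map_sum, Nat.sub_zero]
    rw [add_comm]
    congr 2
    refine Finset.sum_congr rfl fun j _ => ?_
    rw [Nat.add_sub_add_right]

theorem PL_tL (l : ℕ) (e : E) (x) : PL R l (tL e x) = tL e (PL R l x) := by
  refine XX_ind (f := PL R l ∘ₗ tL e) (g := tL e ∘ₗ PL R l) ?_ x
  intro r s x
  simp only [LinearMap.comp_apply]
  rw [tL_ix, PL_ix, PL_ix, tL_ix]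
  congr 1
  exact LinearMap.congr_fun (R.dl_lmul l r s e) x
theorem PL_tR (l : ℕ) (e : E) (x) : PL R l (tR e x) = tR e (PL R l x) := by
  refine XX_ind (f := PL R l ∘ₗ tR e) (g := tR e ∘ₗ PL R l) ?_ x
  intro r s x
  simp only [LinearMap.comp_apply]
  rw [tR_ix, PL_ix, PL_ix, tR_ix]
  congr 1
  exact LinearMap.congr_fun (R.dl_rmul l r s e) x
theorem t_PL (e : E) (x) : tP R (tL e x) = tL e (tP R x) := by
  refine XX_ind (f := tP R ∘ₗ tL e) (g := tL e ∘ₗ tP R) ?_ x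
  intro r s x
  simp only [LinearMap.comp_apply]
  rw [tL_ix, tP_ix, tP_ix, map_sum]
  exact Finset.sum_congr rfl fun l _ => by rw [← PL_tL, tL_ix]
theorem t_PR (e : E) (x) : tP R (tR e x) = tR e (tP R x) := by
  refine XX_ind (f := tP R ∘ₗ tR e) (g := tR e ∘ₗ tP R) ?_ x
  intro r s x
  simp only [LinearMap.comp_apply]
  rw [tR_ix, tP_ix, tP_ix, map_sum]
  exact Finset.sum_congr rfl fun l _ => by rw [← PL_tR, tR_ix]
theorem t_D0L (e : E) (x) : tD0 R (tL e x) = tL e (tD0 R x) := by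
  refine XX_ind (f := tD0 R ∘ₗ tL e) (g := tL e ∘ₗ tD0 R) ?_ x
  intro r s x
  simp only [LinearMap.comp_apply]
  rcases r with _ | r
  · rw [tL_ix, tD0_zero, tD0_zero, map_zero]
  · rw [tL_ix, tD0_succ, tD0_succ, tL_ix, d0_lX]
theorem t_D0R (e : E) (x) : tD0 R (tR e x) = tR e (tD0 R x) := by
  refine XX_ind (f := tD0 R ∘ₗ tR e) (g := tR e ∘ₗ tD0 R) ?_ x
  intro r s x
  simp only [LinearMap.comp_apply]
  rcases r with _ | r
  · rw [tR_ix, tD0_zero, tD0_zero, map_zero]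
  · rw [tR_ix, tD0_succ, tD0_succ, tR_ix, d0_rX]
theorem t_GL (e : E) (x) : tG R (tL e x) = tL e (tG R x) := by
  refine XX_ind (f := tG R ∘ₗ tL e) (g := tL e ∘ₗ tG R) ?_ x
  intro r s x
  simp only [LinearMap.comp_apply]
  rw [tL_ix, tG_ix, tG_ix, tL_ix, sig_lX]
theorem t_G0L (e : E) (y) : tG0 R (tLY e y) = tL e (tG0 R y) := by
  refine YY_ind (f := tG0 R ∘ₗ tLY e) (g := tL e ∘ₗ tG0 R) ?_ y
  intro s x
  simp only [LinearMap.comp_apply]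
  rw [tLY_iy, tG0_iy, tG0_iy, tL_ix, sig0_wmap, lX_lZ, wmap_lZ]
theorem t_ML (e : E) (x) : tM R (tL e x) = tLY e (tM R x) := by
  refine XX_ind (f := tM R ∘ₗ tL e) (g := tLY e ∘ₗ tM R) ?_ x
  intro r s x
  simp only [LinearMap.comp_apply]
  rcases r with _ | r
  · rw [tL_ix, tM_zero, tM_zero, tLY_iy, lX_lZ, mu_lZ]
  · rw [tL_ix, tM_succ, tM_succ, map_zero]
theorem t_etaL (e : E) (y : YY k H E) : teta (tLY e y) = tLY e (teta y) := by
  refine YY_ind (f := teta ∘ₗ tLY e) (g := tLY e ∘ₗ teta) ?_ y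
  intro s x
  simp only [LinearMap.comp_apply]
  rw [tLY_iy, teta_iy, teta_iy, tLY_iy, eta_lZ]

theorem tP_mem {p q : ℕ → ℕ → Prop} (h : ∀ r s l, p r s → l < s → q (r + l) (s - (l+1))) (x)
    (hx : x ∈ FF k A H E p) : tP R x ∈ FF k A H E q := by
  refine FF_map (tP R) (fun r s x hp => ?_) x hx
  rw [tP_ix]
  refine Submodule.sum_mem _ fun l hl => ?_
  rw [PL_ix]
  exact ix_mem (h r s l hp (Finset.mem_range.1 hl)) _
theorem tD0_mem {p q : ℕ → ℕ → Prop} (h : ∀ r s, p (r+1) s → q r s) (x)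
    (hx : x ∈ FF k A H E p) : tD0 R x ∈ FF k A H E q := by
  refine FF_map (tD0 R) (fun r s x hp => ?_) x hx
  rcases r with _ | r
  · rw [tD0_zero]; exact Submodule.zero_mem _
  · rw [tD0_succ]
    exact ix_mem (h r s hp) _

def tPert : Pert k (XX k A H E) (YY k H E) E where
  D0 := tD0 R
  P := tP R
  G := tG R
  G0 := tG0 R
  M := tM R
  del := tdel R
  eta := teta
  eps := teps S
  etam := tetam
  L := tL
  LY := tLY
  Rr := tR
  F m := FF k A H E (fun _ s => s < m)
  T n := FF k A H E (fun r s => r + s < n)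
  gen n := {g | ∃ (r s : ℕ) (_ : r + s < n) (hs : Fin s → H) (as : Fin r → A), g = ix r s (xgen 1 hs as 1)}
  row := t_row R
  MD0 := t_MD0 R
  MG := t_MG R
  MG0 := t_MG0 R
  D0G0 := t_D0G0 R
  D0D0 := t_D0D0 R
  MP := t_MP R
  deldel := t_deldel R
  epsdel := t_epsdel R
  deleta := t_deleta R
  epsetam e := by rw [tetam_apply, teps_zero, eps_etam]
  F0 := FF_bot fun r s => by omega
  PF m := tP_mem R fun r s l h hl => by omega
  PF0 m := tP_mem R fun r s l h hl => by omega
  D0F m := tD0_mem R fun r s h => by omega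
  Tall := exists_FF
  GF m := FF_map (tG R) fun r s x h => by rw [tG_ix]; exact ix_mem (p := fun _ s => s < m) h _
  TF n := FF_map LinearMap.id fun r s x h => ix_mem (by omega) x
  T0 := FF_bot fun r s => by omega
  D0T n := tD0_mem R fun r s h => by omega
  PT n := tP_mem R fun r s l h hl => by omega
  G0T n := FF_map (tG0 R ∘ₗ teta ∘ₗ tM R) fun r s x h => by
    simp only [LinearMap.comp_apply]
    rcases r with _ | r
    · rw [tM_zero, teta_iy, tG0_iy]; exact ix_mem (by omega) _
    · rw [tM_succ, map_zero, map_zero]; exact Submodule.zero_mem _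
  genT n g hg := by
    obtain ⟨r, s, h, hs, as, rfl⟩ := hg
    exact ix_mem (p := fun r s => r + s < n) h _
  Tgen n f hf x hx := by
    refine FF_le (U := LinearMap.ker f) (fun r s x h => ?_) hx
    have : f ∘ₗ ix r s = 0 := by
      refine x_ext_lr S fun e e' hs as => ?_
      have := hf e e' _ ⟨r, s, h, hs, as, rfl⟩
      rw [tR_ix, tL_ix] at this
      exact this
    exact LinearMap.congr_fun this x
  hgen n g hg := by
    obtain ⟨r, s, h, hs, as, rfl⟩ := hg
    exact t_hgen R r s hs as
  D0L := t_D0L R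
  PL := t_PL R
  G_L := t_GL R
  G0L := t_G0L R
  ML := t_ML R
  etaL := t_etaL
  D0R := t_D0R R
  PR := t_PR R

end Tot2

section Transfer
variable {k A H E N : Type} [CommRing k] [Ring A] [Algebra k A] [Ring H] [HopfAlgebra k H]
  [Ring E] [Algebra k E] [AddCommGroup N] [Module k N]
variable {S : CrossedProduct k A H E} (R : ResData k A H E S)

def jt (n : ℕ) (s : Fin (n+1)) : Xc k A H E (n - (s : ℕ)) (s : ℕ) →ₗ[k] XT k A H E n :=
  DirectSum.lof k (Fin (n + 1)) (fun s' : Fin (n + 1) => Xc k A H E (n - (s' : ℕ)) (s' : ℕ)) s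

theorem XT_ext {n : ℕ} {f g : XT k A H E n →ₗ[k] N} (h : ∀ s x, f (jt n s x) = g (jt n s x)) : f = g := by
  apply DirectSum.linearMap_ext
  intro s
  exact LinearMap.ext fun x => h s x
theorem XT_ind {n : ℕ} {f g : XT k A H E n →ₗ[k] N} (h : ∀ s x, f (jt n s x) = g (jt n s x)) (x) : f x = g x :=
  LinearMap.congr_fun (XT_ext h) x

def inc (n : ℕ) : XT k A H E n →ₗ[k] XX k A H E :=
  DirectSum.toModule k (Fin (n + 1)) _ (fun s => ix (n - (s : ℕ)) (s : ℕ))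
theorem inc_jt (n : ℕ) (s : Fin (n+1)) (x : Xc k A H E (n - (s : ℕ)) (s : ℕ)) : inc n (jt n s x) = ix (n - (s : ℕ)) (s : ℕ) x :=
  DirectSum.toModule_lof k (φ := fun s : Fin (n+1) => ix (n - (s : ℕ)) (s : ℕ)) s x

def prj (n : ℕ) : XX k A H E →ₗ[k] XT k A H E n :=
  xl fun r s => if h : r + s = n then
    jt n ⟨s, by omega⟩ ∘ₗ xcast (show r = n - s by omega) rfl else 0

theorem prj_ne (n r s : ℕ) (h : r + s ≠ n) (x : Xc k A H E r s) : prj n (ix r s x) = 0 := by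
  refine (xl_ix _ r s x).trans ?_
  rw [dif_neg h]; rfl
theorem prj_eq (n r s : ℕ) (h : r + s = n) (x : Xc k A H E r s) : prj n (ix r s x) = jt n ⟨s, by omega⟩ (xcast (show r = n - s by omega) rfl x) := by
  refine (xl_ix _ r s x).trans ?_
  rw [dif_pos h]; rfl
theorem inc_prj (n r s : ℕ) (h : r + s = n) (x : Xc k A H E r s) : inc n (prj n (ix r s x)) = ix r s x := by
  rw [prj_eq n r s h, inc_jt]
  exact ix_cast _ _ x
theorem prj_inc (n : ℕ) (x : XT k A H E n) : prj n (inc n x) = x := by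
  refine XT_ind (f := prj n ∘ₗ inc n) (g := LinearMap.id) ?_ x
  intro s x
  simp only [LinearMap.comp_apply, LinearMap.id_apply]
  rw [inc_jt, prj_eq n _ _ (by have := s.isLt; omega)]
  rfl
theorem inc_inj (n : ℕ) {x y : XT k A H E n} (h : inc n x = inc n y) : x = y := by
  rw [← prj_inc n x, h, prj_inc]

theorem lT_jt (e : E) (n : ℕ) (s : Fin (n+1)) (x : Xc k A H E (n - (s : ℕ)) (s : ℕ)) : lT e n (jt n s x) = jt n s (lX e x) :=
  DirectSum.toModule_lof k (φ := fun s : Fin (n+1) => jt n s ∘ₗ lX e) s x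
theorem rT_jt (e : E) (n : ℕ) (s : Fin (n+1)) (x : Xc k A H E (n - (s : ℕ)) (s : ℕ)) : rT e n (jt n s x) = jt n s (rX e x) :=
  DirectSum.toModule_lof k (φ := fun s : Fin (n+1) => jt n s ∘ₗ rX e) s x
theorem inc_lT (e : E) (n) (x : XT k A H E n) : inc n (lT e n x) = tL e (inc n x) := by
  refine XT_ind (f := inc n ∘ₗ lT e n) (g := tL e ∘ₗ inc n) ?_ x
  intro s x
  simp only [LinearMap.comp_apply]
  rw [lT_jt, inc_jt, inc_jt, tL_ix]
theorem inc_rT (e : E) (n) (x : XT k A H E n) : inc n (rT e n x) = tR e (inc n x) := by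
  refine XT_ind (f := inc n ∘ₗ rT e n) (g := tR e ∘ₗ inc n) ?_ x
  intro s x
  simp only [LinearMap.comp_apply]
  rw [rT_jt, inc_jt, inc_jt, tR_ix]
theorem prj_tL (e : E) (n) (x : XX k A H E) : prj n (tL e x) = lT e n (prj n x) := by
  refine XX_ind (f := prj n ∘ₗ tL e) (g := lT e n ∘ₗ prj n) ?_ x
  intro r s x
  simp only [LinearMap.comp_apply]
  by_cases h : r + s = n
  · apply inc_inj
    rw [tL_ix, inc_prj n r s h, inc_lT, inc_prj n r s h, tL_ix]
  · rw [tL_ix, prj_ne n r s h, prj_ne n r s h, map_zero]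

theorem dT_jt (n : ℕ) (s : Fin (n+2)) (x) : dT R n (jt (n+1) s x) =
    ∑ l : Fin ((s : ℕ) + 1),
      if h : 0 < (n + 1 - (s : ℕ)) + (l : ℕ) then
        jt n ⟨(s : ℕ) - (l : ℕ), by have := s.isLt; have := l.isLt; omega⟩
          (xcast
            (show (n + 1 - (s : ℕ)) + (l : ℕ) - 1 = n - ((s : ℕ) - (l : ℕ)) by
              have := s.isLt; have := l.isLt; omega)
            rfl
          (R.dl (l : ℕ) (n + 1 - (s : ℕ)) (s : ℕ) x))
      else 0 := by
  refine (DirectSum.toModule_lof k (M := fun s' : Fin (n + 2) => Xc k A H E (n + 1 - (s' : ℕ)) (s' : ℕ)) s x).trans ?_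
  rw [LinearMap.sum_apply]
  refine Finset.sum_congr rfl fun l _ => ?_
  split_ifs <;> rfl

theorem tD0_pos (r s x) (h : 0 < r) : tD0 R (ix r s x) = PL R 0 (ix r s x) := by
  rcases r with _ | r
  · omega
  · exact tD0_succ' R r s x
theorem tD0_neg (r s x) (h : ¬ 0 < r) : tD0 R (ix r s x) = 0 := by
  rcases r with _ | r
  · exact tD0_zero R s x
  · omega

theorem inc_dT (n : ℕ) (x) : inc n (dT R n x) = (tPert R).D (inc (n+1) x) := by
  refine XT_ind (f := inc n ∘ₗ dT R n) (g := (tPert R).D ∘ₗ inc (n+1)) ?_ x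
  intro s x
  simp only [LinearMap.comp_apply]
  rw [dT_jt, inc_jt, map_sum, Fin.sum_univ_succ, Pert.D_apply]
  have h1 : ∀ y, (tPert R).P y = tP R y := fun _ => rfl
  have h2 : ∀ y, (tPert R).D0 y = tD0 R y := fun _ => rfl
  rw [h1, h2, tP_ix, Finset.sum_range]
  congr 1
  · by_cases h : 0 < n + 1 - (s : ℕ)
    · rw [dif_pos (by simpa using h), inc_jt]
      rw [tD0_pos R _ _ _ h, PL_ix]
      exact ix_cast _ _ _
    · rw [dif_neg (by simpa using h), map_zero, tD0_neg R _ _ _ h]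
  · refine Finset.sum_congr rfl fun l _ => ?_
    rw [dif_pos (by simp), inc_jt, PL_ix]
    exact ix_cast _ _ _

theorem prj_D (n : ℕ) (x) : prj n ((tPert R).D x) = dT R n (prj (n+1) x) := by
  refine XX_ind (f := prj n ∘ₗ (tPert R).D) (g := dT R n ∘ₗ prj (n+1)) ?_ x
  intro r s x
  simp only [LinearMap.comp_apply]
  by_cases h : r + s = n + 1
  · conv_lhs => rw [← inc_prj (n+1) r s h]
    rw [← inc_dT, prj_inc]
  · rw [prj_ne _ _ _ h, map_zero, Pert.D_apply, map_add]
    have h1 : ∀ y, (tPert R).P y = tP R y := fun _ => rfl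
    have h2 : ∀ y, (tPert R).D0 y = tD0 R y := fun _ => rfl
    rw [h1, h2, tP_ix, map_sum, Finset.sum_eq_zero, add_zero]
    · rcases r with _ | r
      · rw [tD0_zero, map_zero]
      · rw [tD0_succ, prj_ne]; omega
    · intro l hl
      have := Finset.mem_range.1 hl
      rw [PL_ix, prj_ne]; omega

theorem inc_T (n : ℕ) (x : XT k A H E n) : inc n x ∈ (tPert R).T (n+1) := by
  have : (((tPert R).T (n+1)).mkQ ∘ₗ inc n) = 0 := by
    refine XT_ext fun s x => ?_
    rw [LinearMap.comp_apply, inc_jt, LinearMap.zero_apply, Submodule.mkQ_apply, Submodule.Quotient.mk_eq_zero]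
    exact ix_mem (p := fun r s => r + s < n + 1) (by have := s.isLt; omega) x
  exact (Submodule.Quotient.mk_eq_zero _).1 (LinearMap.congr_fun this x)

theorem epsM_ix (r s x) (h : r + s ≠ 0) : teps S (tM R (ix r s x)) = 0 := by
  rcases r with _ | r
  · rcases s with _ | s
    · exact (h rfl).elim
    · rw [tM_zero, teps_succ]
  · rw [tM_succ, map_zero]

theorem epsM_inc_succ (n : ℕ) (x : XT k A H E (n+1)) : teps S (tM R (inc (n+1) x)) = 0 := by
  refine XT_ind (f := teps S ∘ₗ tM R ∘ₗ inc (n+1)) (g := 0) ?_ x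
  intro s x
  simp only [LinearMap.comp_apply, LinearMap.zero_apply]
  rw [inc_jt, epsM_ix]
  have := s.isLt
  omega

theorem epsM_inc_zero (mult : Xc k A H E 0 0 →ₗ[k] E)
    (hmult : ∀ e e' : E,
      mult (xgen e (fun i : Fin 0 => i.elim0) (fun i : Fin 0 => i.elim0) e') = e * e') (x) :
    teps S (tM R (inc 0 x)) = - multT mult x := by
  refine XT_ind (f := teps S ∘ₗ tM R ∘ₗ inc 0) (g := - multT mult) ?_ x
  intro s x
  obtain rfl : s = 0 := Subsingleton.elim (α := Fin 1) _ _
  simp only [LinearMap.comp_apply, LinearMap.neg_apply]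
  rw [inc_jt]
  have h1 : multT mult (jt 0 0 x) = mult x := DirectSum.toModule_lof k (M := fun s' : Fin 1 => Xc k A H E (0 - (s' : ℕ)) (s' : ℕ)) 0 x
  rw [h1]
  refine (congrArg (teps S) (tM_zero R 0 x)).trans ?_
  rw [teps_zero]
  have : epsY S ∘ₗ R.mu 0 = - mult := by
    refine x_ext_lr S fun e e' hs as => ?_
    rw [← xgen_lr]
    obtain rfl : hs = fun i : Fin 0 => i.elim0 := funext fun i => i.elim0
    obtain rfl : as = fun i : Fin 0 => i.elim0 := funext fun i => i.elim0
    rw [LinearMap.neg_apply, hmult, LinearMap.comp_apply]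
    refine (congrArg (epsY S) (mu_zero R e e')).trans ?_
    rw [epsY_lZ, epsY_jm, mul_neg]
  exact LinearMap.congr_fun this x

end Transfer

section Final
variable {k A H E N : Type} [CommRing k] [Ring A] [Algebra k A] [Ring H] [HopfAlgebra k H]
  [Ring E] [Algebra k E] [AddCommGroup N] [Module k N]
variable {S : CrossedProduct k A H E} (R : ResData k A H E S)

theorem dT_dT (n : ℕ) (x) : dT R n (dT R (n+1) x) = 0 := by
  apply inc_inj
  rw [inc_dT, inc_dT, Pert.DD, map_zero]

theorem exists_tT (n : ℕ) : ∃ t : XT k A H E n →ₗ[k] XT k A H E (n+1),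
    (∀ e x, t (lT e n x) = lT e (n+1) (t x)) ∧
    ∀ x, (tPert R).D (inc n x) = 0 → teps S (tM R (inc n x)) = 0 → dT R n (t x) = x := by
  obtain ⟨t, hL, ht⟩ := (tPert R).exists_tau (n+1)
  refine ⟨prj (n+1) ∘ₗ t ∘ₗ inc n, fun e x => ?_, fun x h1 h2 => ?_⟩
  · simp only [LinearMap.comp_apply]
    rw [inc_lT, ← prj_tL]
    exact congrArg _ (hL e _)
  · simp only [LinearMap.comp_apply]
    rw [← prj_D, ht _ (inc_T R n x) h1 h2, prj_inc]

def tT (n : ℕ) : XT k A H E n →ₗ[k] XT k A H E (n+1) := (exists_tT R n).choose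
theorem tT_lT (n : ℕ) (e x) : tT R n (lT e n x) = lT e (n+1) (tT R n x) := (exists_tT R n).choose_spec.1 e x
theorem dT_tT (n : ℕ) (x) (h1 : (tPert R).D (inc n x) = 0) (h2 : teps S (tM R (inc n x)) = 0) :
    dT R n (tT R n x) = x := (exists_tT R n).choose_spec.2 x h1 h2

def s0 : E →ₗ[k] XT k A H E 0 := prj 0 ∘ₗ tG0 R ∘ₗ tetam
theorem inc_s0 (e : E) : inc 0 (s0 R e) = tG0 R (tetam e) := by
  simp only [s0, LinearMap.comp_apply]
  rw [tetam_apply, tG0_iy, inc_prj 0 0 0 rfl]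
theorem s0_lT (e x : E) : s0 R (e * x) = lT e 0 (s0 R x) := by
  apply inc_inj
  rw [inc_s0, inc_lT, inc_s0, tetam_apply, etam_lZ, ← tLY_iy, t_G0L, tetam_apply]

variable (mult : Xc k A H E 0 0 →ₗ[k] E)

def sT : ∀ n : ℕ, XT k A H E n →ₗ[k] XT k A H E (n+1)
  | 0 => tT R 0 ∘ₗ (LinearMap.id - s0 R ∘ₗ (- multT mult))
  | n + 1 => tT R (n+1) ∘ₗ (LinearMap.id - sT n ∘ₗ dT R n)

theorem sT_zero (x) : sT R mult 0 x = tT R 0 (x - s0 R (- multT mult x)) := rfl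
theorem sT_succ (n x) : sT R mult (n+1) x = tT R (n+1) (x - sT R mult n (dT R n x)) := rfl

theorem D_inc0 (x : XT k A H E 0) : (tPert R).D (inc 0 x) = 0 := by
  have h := (tPert R).D_T 0 _ (inc_T R 0 x)
  rw [(tPert R).T0] at h
  exact (Submodule.mem_bot k).1 h

theorem dT_lT (n : ℕ) (e : E) (x) : dT R n (lT e (n+1) x) = lT e n (dT R n x) := by
  apply inc_inj
  rw [inc_dT, inc_lT, inc_lT, inc_dT]
  exact (tPert R).D_L e _
theorem dT_rT (n : ℕ) (e : E) (x) : dT R n (rT e (n+1) x) = rT e n (dT R n x) := by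
  apply inc_inj
  rw [inc_dT, inc_rT, inc_rT, inc_dT]
  exact (tPert R).D_R e _

section hm
variable (hmult : ∀ e e' : E,
      mult (xgen e (fun i : Fin 0 => i.elim0) (fun i : Fin 0 => i.elim0) e') = e * e')

theorem multT_dT (hmult : ∀ e e' : E,
      mult (xgen e (fun i : Fin 0 => i.elim0) (fun i : Fin 0 => i.elim0) e') = e * e')
    (x) : multT mult (dT R 0 x) = 0 := by
  rw [← neg_eq_zero, ← epsM_inc_zero R mult hmult, inc_dT]
  exact (tPert R).epsMD _

theorem multT_s0 (hmult : ∀ e e' : E,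
      mult (xgen e (fun i : Fin 0 => i.elim0) (fun i : Fin 0 => i.elim0) e') = e * e')
    (e) : - multT mult (s0 R e) = e := by
  rw [← epsM_inc_zero R mult hmult, inc_s0]
  exact (tPert R).D_G0_etam e

theorem dT_sT_zero (hmult : ∀ e e' : E,
      mult (xgen e (fun i : Fin 0 => i.elim0) (fun i : Fin 0 => i.elim0) e') = e * e')
    (x) : dT R 0 (sT R mult 0 x) = x - s0 R (- multT mult x) := by
  rw [sT_zero, dT_tT]
  · exact D_inc0 R _
  · rw [epsM_inc_zero R mult hmult, map_sub, neg_sub, ← neg_neg (multT mult (s0 R _)), multT_s0 R mult hmult]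
    abel

theorem dT_sT_succ (hmult : ∀ e e' : E,
      mult (xgen e (fun i : Fin 0 => i.elim0) (fun i : Fin 0 => i.elim0) e') = e * e')
    (n : ℕ) : ∀ x, dT R (n+1) (sT R mult (n+1) x) = x - sT R mult n (dT R n x) := by
  induction n with
  | zero =>
    intro x
    rw [sT_succ, dT_tT]
    · rw [← inc_dT, map_sub, dT_sT_zero R mult hmult, multT_dT R mult hmult, neg_zero, map_zero, sub_zero, sub_self, map_zero]
    · exact epsM_inc_succ R _ _
  | succ n ih =>
    intro x
    rw [sT_succ, dT_tT]
    · rw [← inc_dT, map_sub, ih, dT_dT, map_zero, sub_zero, sub_self, map_zero]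
    · exact epsM_inc_succ R _ _

theorem multT_lT (S : CrossedProduct k A H E) (hmult : ∀ e e' : E,
      mult (xgen e (fun i : Fin 0 => i.elim0) (fun i : Fin 0 => i.elim0) e') = e * e')
    (e : E) (x) : multT mult (lT e 0 x) = e * multT mult x := by
  have h : mult ∘ₗ lX e = LinearMap.mulLeft k e ∘ₗ mult := by
    refine x_ext_lr S fun a b hs as => ?_
    rw [← xgen_lr]
    obtain rfl : hs = fun i : Fin 0 => i.elim0 := funext fun i => i.elim0
    obtain rfl : as = fun i : Fin 0 => i.elim0 := funext fun i => i.elim0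
    rw [LinearMap.comp_apply, lX_xgen, hmult, LinearMap.comp_apply, hmult, LinearMap.mulLeft_apply, mul_assoc]
  refine XT_ind (f := multT mult ∘ₗ lT e 0) (g := LinearMap.mulLeft k e ∘ₗ multT mult) ?_ x
  intro s x
  obtain rfl : s = 0 := Subsingleton.elim (α := Fin 1) _ _
  have h1 : ∀ x, multT mult (jt 0 0 x) = mult x := fun x => DirectSum.toModule_lof k (M := fun s' : Fin 1 => Xc k A H E (0 - (s' : ℕ)) (s' : ℕ)) 0 x
  rw [LinearMap.comp_apply, lT_jt, LinearMap.comp_apply, h1, h1]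
  exact LinearMap.congr_fun h x

theorem sT_lT (hmult : ∀ e e' : E,
      mult (xgen e (fun i : Fin 0 => i.elim0) (fun i : Fin 0 => i.elim0) e') = e * e')
    (n : ℕ) (e : E) : ∀ x, sT R mult n (lT e n x) = lT e (n+1) (sT R mult n x) := by
  induction n with
  | zero =>
    intro x
    rw [sT_zero, sT_zero, multT_lT mult S hmult, ← mul_neg, s0_lT, ← map_sub, tT_lT]
  | succ n ih =>
    intro x
    rw [sT_succ, sT_succ, dT_lT, ih, ← map_sub, tT_lT]
end hm

variable (k A H) in
abbrev VV (n : ℕ) : Type := ⨁ (s : Fin (n+1)), (Tpow k (Qbar k H) (s : ℕ) ⊗[k] Tpow k (Qbar k A) (n - (s : ℕ)))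

def iv (n : ℕ) (s : Fin (n+1)) : (Tpow k (Qbar k H) (s : ℕ) ⊗[k] Tpow k (Qbar k A) (n - (s : ℕ))) →ₗ[k] VV k A H n :=
  DirectSum.lof k (Fin (n+1)) (fun s : Fin (n+1) => (Tpow k (Qbar k H) (s : ℕ) ⊗[k] Tpow k (Qbar k A) (n - (s : ℕ)))) s

def fwd (n : ℕ) : XT k A H E n →ₗ[k] E ⊗[k] (VV k A H n ⊗[k] E) :=
  DirectSum.toModule k (Fin (n+1)) _ fun s =>
    TensorProduct.map LinearMap.id (TensorProduct.map (iv n s) LinearMap.id ∘ₗ (TensorProduct.assoc k _ _ _).symm.toLinearMap)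

theorem fwd_jt (n : ℕ) (s : Fin (n+1)) (e : E) (t : Tpow k (Qbar k H) (s : ℕ)) (a : Tpow k (Qbar k A) (n - (s : ℕ))) (e' : E) :
    fwd n (jt n s (e ⊗ₜ[k] (t ⊗ₜ[k] (a ⊗ₜ[k] e')))) = e ⊗ₜ[k] ((iv n s (t ⊗ₜ[k] a)) ⊗ₜ[k] e') :=
  DirectSum.toModule_lof k (M := fun s' : Fin (n+1) => Xc k A H E (n - (s' : ℕ)) (s' : ℕ)) s _

def bwd (n : ℕ) : E ⊗[k] (VV k A H n ⊗[k] E) →ₗ[k] XT k A H E n :=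
  TensorProduct.lift (LinearMap.flip (TensorProduct.lift (DirectSum.toModule k (Fin (n+1)) _ fun s =>
    TensorProduct.curry (LinearMap.flip (TensorProduct.curry (jt n s)) ∘ₗ (TensorProduct.assoc k _ _ _).toLinearMap))))

theorem bwd_iv (n : ℕ) (s : Fin (n+1)) (e : E) (t : Tpow k (Qbar k H) (s : ℕ)) (a : Tpow k (Qbar k A) (n - (s : ℕ))) (e' : E) :
    bwd n (e ⊗ₜ[k] ((iv n s (t ⊗ₜ[k] a)) ⊗ₜ[k] e')) = jt n s (e ⊗ₜ[k] (t ⊗ₜ[k] (a ⊗ₜ[k] e'))) :=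
  congrArg (fun f => f e' e) (DirectSum.toModule_lof k
    (φ := fun s => TensorProduct.curry (LinearMap.flip (TensorProduct.curry (jt n s)) ∘ₗ (TensorProduct.assoc k _ _ _).toLinearMap)) s (t ⊗ₜ[k] a))

theorem XT_ext4 {n : ℕ} {f g : XT k A H E n →ₗ[k] N} (h : ∀ s e t a e',
    f (jt n s (e ⊗ₜ[k] (t ⊗ₜ[k] (a ⊗ₜ[k] e')))) = g (jt n s (e ⊗ₜ[k] (t ⊗ₜ[k] (a ⊗ₜ[k] e'))))) : f = g := by
  refine XT_ext fun s x => ?_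
  have : f ∘ₗ jt n s = g ∘ₗ jt n s := by
    refine TensorProduct.ext (LinearMap.ext fun e => ?_)
    refine TensorProduct.ext (LinearMap.ext fun t => ?_)
    refine TensorProduct.ext (LinearMap.ext fun a => LinearMap.ext fun e' => ?_)
    exact h s e t a e'
  exact LinearMap.congr_fun this x

theorem fwd_bwd (n : ℕ) : fwd n ∘ₗ bwd n = (LinearMap.id : E ⊗[k] (VV k A H n ⊗[k] E) →ₗ[k] _) := by
  refine TensorProduct.ext (LinearMap.ext fun e => ?_)
  refine TensorProduct.ext (DirectSum.linearMap_ext k fun s => ?_)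
  refine TensorProduct.ext (LinearMap.ext fun t => LinearMap.ext fun a => LinearMap.ext fun e' => ?_)
  exact (congrArg (fwd n) (bwd_iv n s e t a e')).trans (fwd_jt n s e t a e')

theorem bwd_fwd (n : ℕ) : bwd n ∘ₗ fwd n = (LinearMap.id : XT k A H E n →ₗ[k] _) := by
  refine XT_ext4 fun s e t a e' => ?_
  rw [LinearMap.comp_apply, fwd_jt, bwd_iv]; rfl

theorem fwd_lT (n : ℕ) (e : E) (x : XT k A H E n) :
    fwd n (lT e n x) = TensorProduct.map (LinearMap.mulLeft k e) LinearMap.id (fwd n x) := by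
  have : fwd n ∘ₗ lT e n = TensorProduct.map (LinearMap.mulLeft k e) LinearMap.id ∘ₗ (fwd n : XT k A H E n →ₗ[k] _) := by
    refine XT_ext4 fun s a t b e' => ?_
    rw [LinearMap.comp_apply, LinearMap.comp_apply, fwd_jt, lT_jt]
    exact fwd_jt n s (e * a) t b e'
  exact LinearMap.congr_fun this x
theorem fwd_rT (n : ℕ) (e : E) (x : XT k A H E n) :
    fwd n (rT e n x) = TensorProduct.map LinearMap.id (TensorProduct.map LinearMap.id (LinearMap.mulRight k e)) (fwd n x) := by
  have : fwd n ∘ₗ rT e n = TensorProduct.map LinearMap.id (TensorProduct.map LinearMap.id (LinearMap.mulRight k e)) ∘ₗ (fwd n : XT k A H E n →ₗ[k] _) := by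
    refine XT_ext4 fun s a t b e' => ?_
    rw [LinearMap.comp_apply, LinearMap.comp_apply, fwd_jt, rT_jt]
    exact fwd_jt n s a t b (e' * e)
  exact LinearMap.congr_fun this x

end Final


section Statement1

variable {k A H E : Type} [CommRing k] [Ring A] [Algebra k A] [Ring H] [HopfAlgebra k H]
  [Ring E] [Algebra k E]

/-- **Theorem 1.1.1: the resolution `(X_*, d_*)` of a crossed product.**
Let `E = A #_f H` be a crossed product and let `(X_*, d_*)` be given by
`X_n = ⊕_{r+s=n} E ⊗ H̄^{⊗s} ⊗ Ā^{⊗r} ⊗ E` and `d_n = ∑_{r+s=n, r+l>0} ∑_{l=0}^s d^l_{rs}`,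
with `μ : X_0 = E ⊗ E → E` the multiplication map.  Then
`E ←(-μ)− X_0 ← X_1 ← X_2 ← ⋯` is a relative projective resolution of `E` as an
`E`-bimodule: it is a complex of `E`-bimodules, each `X_n` is a relatively projective
`E`-bimodule (isomorphic to a bimodule of the form `E ⊗ V ⊗ E`), and the augmented
complex is contractible as a complex of left `E`-modules. -/
theorem crossed_product_resolution
    (S : CrossedProduct k A H E) (R : ResData k A H E S)
    (mult : Xc k A H E 0 0 →ₗ[k] E)
    (hmult : ∀ e e' : E,
      mult (xgen e (fun i : Fin 0 => i.elim0) (fun i : Fin 0 => i.elim0) e') = e * e') :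
    -- `(X_*, d_*)` is a complex and `μ ∘ d₁ = 0`
    (multT mult ∘ₗ dT R 0 = 0) ∧
    (∀ n : ℕ, dT R n ∘ₗ dT R (n + 1) = 0) ∧
    -- the differentials are maps of `E`-bimodules
    (∀ (n : ℕ) (e : E), dT R n ∘ₗ lT e (n + 1) = lT e n ∘ₗ dT R n ∧
      dT R n ∘ₗ rT e (n + 1) = rT e n ∘ₗ dT R n) ∧
    -- each `X_n` is relatively projective: as an `E`-bimodule it has the form `E ⊗ V ⊗ E`
    (∀ n : ℕ, ∃ (V : Type) (_ : AddCommGroup V) (_ : Module k V)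
      (φ : XT k A H E n ≃ₗ[k] E ⊗[k] (V ⊗[k] E)),
      (∀ (e : E) (x : XT k A H E n),
        φ (lT e n x) = TensorProduct.map (LinearMap.mulLeft k e) LinearMap.id (φ x)) ∧
      (∀ (e : E) (x : XT k A H E n),
        φ (rT e n x) =
          TensorProduct.map LinearMap.id
            (TensorProduct.map LinearMap.id (LinearMap.mulRight k e)) (φ x))) ∧
    -- the augmented complex is contractible as a complex of left `E`-modules
    (∃ (σ₀ : E →ₗ[k] XT k A H E 0) (σ : ∀ n : ℕ, XT k A H E n →ₗ[k] XT k A H E (n + 1)),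
      ((-(multT mult)) ∘ₗ σ₀ = LinearMap.id) ∧
      (σ₀ ∘ₗ (-(multT mult)) + dT R 0 ∘ₗ σ 0 = LinearMap.id) ∧
      (∀ n : ℕ, σ n ∘ₗ dT R n + dT R (n + 1) ∘ₗ σ (n + 1) = LinearMap.id) ∧
      (∀ e : E, σ₀ ∘ₗ LinearMap.mulLeft k e = lT e 0 ∘ₗ σ₀) ∧
      (∀ (n : ℕ) (e : E), σ n ∘ₗ lT e n = lT e (n + 1) ∘ₗ σ n)) := by
  refine ⟨LinearMap.ext fun x => multT_dT R mult hmult x, fun n => LinearMap.ext fun x => dT_dT R n x,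
    fun n e => ⟨LinearMap.ext fun x => dT_lT R n e x, LinearMap.ext fun x => dT_rT R n e x⟩,
    fun n => ⟨VV k A H n, inferInstance, inferInstance,
      LinearEquiv.ofLinear (fwd n) (bwd n) (fwd_bwd n) (bwd_fwd n), fwd_lT n, fwd_rT n⟩,
    s0 R, sT R mult, LinearMap.ext fun x => multT_s0 R mult hmult x, LinearMap.ext fun x => ?_,
    fun n => LinearMap.ext fun x => ?_, fun e => LinearMap.ext fun x => s0_lT R e x,
    fun n e => LinearMap.ext fun x => sT_lT R mult hmult n e x⟩
  · simp only [LinearMap.add_apply, LinearMap.comp_apply, LinearMap.id_apply, LinearMap.neg_apply]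
    rw [dT_sT_zero R mult hmult]
    abel
  · simp only [LinearMap.add_apply, LinearMap.comp_apply, LinearMap.id_apply]
    rw [dT_sT_succ R mult hmult]
    abel

end Statement1

end HopfCrossed
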